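/- arXiv:0806.1645 — 2 statements merged into one kernel-verified Lean document; each statement's English description precedes it below -/
import Mathlib

section
/- Let E ⊆ ℝⁿ be a nonempty reduced minimal set of dimension 1 in ℝⁿ. Then E is either a line (a 1-dimensional affine subspace of ℝⁿ) or a Y-set, i.e., the union of three half-lines contained in a common affine 2-plane, issued from a common endpoint, and making pairwise 120° angles at that point. -/
/-!
The proof compares `E` with networks of segments. If a compact piece `K ⊆ E` touches the closure of
`E \ K` in a finite set `P` only, then `H¹(K)` is at most the length of any connected network
joining the points of `P`: a Lipschitz map of `K` into the network, equal to the identity on `P`,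
extends by the identity on the rest of `E` after a cut-off (`IsMinimalSet.le_image`,
`IsMinimalSet.le_network`). Lower bounds on length come from Eilenberg's inequality: a set that
meets almost every level `{u = t}`, `t ∈ I`, of a `1`-Lipschitz function in at least `m` points has
length at least `m |I|` (`le_hausdorffMeasure_of_slices`).

With `K = E ∩ B̄(x,t)` and the cone over `E ∩ ∂B(x,t)`, these two facts give the monotonicity of
`H¹(E ∩ B̄(x,r)) / r` (`IsMinimalSet.monotonicity`). Merging two spokes of the cone that make an
angle less than `120°` shortens it by a fixed proportion as soon as there are four spokes, so a
density above `3` would grow without bound as the radius doubles; comparison with a grid shows that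
the density stays bounded, hence it is at most `3` (`IsMinimalSet.mass_le_three`). A piece attached
at one point is negligible, so spheres centred on `E` carry at least two points of `E`, and a piece
attached at two points is a segment (`IsMinimalSet.eq_segment`). Therefore every point of `E` is
either regular, `E` being a diameter of a small ball, or a triple point, of density `3` at all
scales (`IsMinimalSet.regular_or_triple`).

If all points are regular, `E` contains a line through each of its points, and a second line would
push the density above `3`; so `E` is a line (`isLine_of_regular`). If `x` is a triple point, equality
in the slicing inequality forces `E` to be radial at regular points (`TripleAt.radial`), and equality
in the comparison with merged spokes forces `120°` angles on a sphere that meets `E` in three points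
(`TripleAt.exists_directions`). There is no second triple point (`TripleAt.unique`), so `E` is the union of the
three rays through those points (`TripleAt.isYSet`).
-/

open MeasureTheory Metric Set Filter Bornology
open scoped ENNReal NNReal Topology InnerProductSpace

noncomputable section

/-- `ℝⁿ` as a Euclidean space. -/
abbrev Euc (n : ℕ) : Type := EuclideanSpace ℝ (Fin n)

/-- `E` is reduced: `H^d(E ∩ B(x,r)) > 0` for every `x ∈ E` and `r > 0`. -/
def IsReducedSet (n d : ℕ) (E : Set (Euc n)) : Prop :=
  ∀ x ∈ E, ∀ r : ℝ, 0 < r → 0 < μH[(d:ℝ)] (E ∩ ball x r)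

/-- A (globally) minimal set of dimension `d` in `ℝⁿ` : a closed set with locally finite
`H^d`-measure such that `H^d(F ∖ φ(F)) ≤ H^d(φ(F) ∖ F)` for every Lipschitz map
`φ : ℝⁿ → ℝⁿ` which differs from the identity only on a bounded set. -/
def IsMinimalSet (n d : ℕ) (F : Set (Euc n)) : Prop :=
  IsClosed F ∧
  (∀ R : ℝ, 0 < R → μH[(d:ℝ)] (F ∩ ball 0 R) < ⊤) ∧
  ∀ φ : Euc n → Euc n, (∃ K : ℝ≥0, LipschitzWith K φ) →
    IsBounded {x | φ x ≠ x} →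
    μH[(d:ℝ)] (F \ φ '' F) ≤ μH[(d:ℝ)] (φ '' F \ F)

/-- A cone centered at the origin. -/
def IsConeAt0 {n : ℕ} (F : Set (Euc n)) : Prop :=
  ∀ x ∈ F, ∀ l : ℝ, 0 < l → l • x ∈ F

/-- A line in `ℝⁿ` (a 1-dimensional affine subspace). -/
def IsLine {n : ℕ} (F : Set (Euc n)) : Prop :=
  ∃ (a v : Euc n), v ≠ 0 ∧ F = {x | ∃ t : ℝ, x = a + t • v}

/-- A Y-set in `ℝⁿ`: the union of three half-lines with common endpoint `a`, contained
in a common affine 2-plane, making pairwise `120°` angles at `a` (three unit directions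
with pairwise inner products `-1/2`; such directions sum to `0`, hence are coplanar). -/
def IsYSet {n : ℕ} (F : Set (Euc n)) : Prop :=
  ∃ (a : Euc n) (v : Fin 3 → Euc n), (∀ j, ‖v j‖ = 1) ∧
    (∀ i j, i ≠ j → ⟪v i, v j⟫_ℝ = -(1/2)) ∧
    F = ⋃ j, {x | ∃ t : ℝ, 0 ≤ t ∧ x = a + t • v j}

/-! ### Slices by a `1`-Lipschitz function -/

section Slices

variable {X : Type*} [MetricSpace X] [MeasurableSpace X] [BorelSpace X]

/-- Covers by sets of small diameter that almost realise the Hausdorff measure. -/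
lemma exists_cover_of_hausdorffMeasure (A : Set X) (hA : μH[1] A ≠ ⊤) (r : ℝ≥0∞) (hr : 0 < r) :
    ∃ t : ℕ → Set X, A ⊆ ⋃ j, t j ∧ (∀ j, ediam (t j) ≤ r) ∧
      ∑' j, (⨆ _ : (t j).Nonempty, ediam (t j) ^ (1 : ℝ)) ≤ μH[1] A + r := by
  have h1 : (⨅ (t : ℕ → Set X) (_ : A ⊆ ⋃ n, t n) (_ : ∀ n, ediam (t n) ≤ r),
          ∑' n, ⨆ _ : (t n).Nonempty, ediam (t n) ^ (1 : ℝ)) ≤ μH[1] A := by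
    rw [Measure.hausdorffMeasure_apply]
    exact le_iSup₂ (f := fun (r : ℝ≥0∞) (_ : 0 < r) =>
      ⨅ (t : ℕ → Set X) (_ : A ⊆ ⋃ n, t n) (_ : ∀ n, ediam (t n) ≤ r),
          ∑' n, ⨆ _ : (t n).Nonempty, ediam (t n) ^ (1 : ℝ)) r hr
  have h2 := h1.trans_lt (ENNReal.lt_add_right hA hr.ne')
  simp only [iInf_lt_iff] at h2
  obtain ⟨t, ht, hd, hlt⟩ := h2
  exact ⟨t, ht, hd, hlt.le⟩

/-- Eilenberg's inequality in dimension one: the number of points of `A` on the level sets of a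
`1`-Lipschitz function has a measurable majorant whose integral is at most `H¹(A)`. Counting is
expressed through finite subsets of the slices. -/
lemma exists_slice_majorant (A : Set X) (u : X → ℝ) (hu : LipschitzWith 1 u) :
    ∃ G : ℝ → ℝ≥0∞, Measurable G ∧
      (∀ t, ∀ F : Finset X, (F : Set X) ⊆ A ∩ u ⁻¹' {t} → (F.card : ℝ≥0∞) ≤ G t) ∧
      ∫⁻ t, G t ≤ μH[1] A := by
  by_cases hA : μH[1] A = ⊤
  · exact ⟨fun _ => ⊤, measurable_const, fun _ _ _ => le_top, by simp [hA]⟩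
  have hpos : ∀ m : ℕ, (0 : ℝ≥0∞) < ((m : ℝ≥0∞) + 1)⁻¹ := fun m => by
    simp [ENNReal.inv_pos]
  choose T hTA hTd hTs using fun m : ℕ =>
    exists_cover_of_hausdorffMeasure A hA (((m : ℝ≥0∞) + 1)⁻¹) (hpos m)
  let N : ℕ → ℝ → ℝ≥0∞ := fun m t => ∑' j, (closure (u '' T m j)).indicator (fun _ => 1) t
  have hNm : ∀ m, Measurable (N m) := fun m =>
    Measurable.tsum fun j => measurable_const.indicator isClosed_closure.measurableSet
  have hlim : Tendsto (fun m : ℕ => ((m : ℝ≥0∞) + 1)⁻¹) atTop (𝓝 0) := by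
    have := (tendsto_add_atTop_iff_nat 1).2 ENNReal.tendsto_inv_nat_nhds_zero
    simpa using this
  have hNi : ∀ m, ∫⁻ t, N m t ≤ μH[1] A + ((m : ℝ≥0∞) + 1)⁻¹ := by
    intro m
    rw [lintegral_tsum fun j =>
      (measurable_const.indicator isClosed_closure.measurableSet).aemeasurable]
    refine le_trans (ENNReal.tsum_le_tsum fun j => ?_) (hTs m)
    rw [lintegral_indicator_const isClosed_closure.measurableSet, one_mul]
    rcases (T m j).eq_empty_or_nonempty with h | h
    · simp [h]
    · simp only [h, iSup_pos, ENNReal.rpow_one]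
      refine (Real.volume_le_diam _).trans ?_
      rw [ediam_closure]
      simpa using hu.ediam_image_le (T m j)
  refine ⟨fun t => liminf (fun m => N m t) atTop, Measurable.liminf hNm, ?_, ?_⟩
  · intro t F hF
    -- Once the covering sets are finer than the separation of `F`, they count all its points.
    obtain ⟨δ, hδ, hsep⟩ : ∃ δ : ℝ≥0∞, 0 < δ ∧ ∀ x ∈ F, ∀ y ∈ F, x ≠ y → δ ≤ edist x y := by
      have hfin : (F.offDiag : Finset (X × X)).Nonempty ∨ F.offDiag = ∅ :=
        F.offDiag.eq_empty_or_nonempty.symm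
      rcases hfin with h | h
      · obtain ⟨q, hq, hmin⟩ := F.offDiag.exists_min_image (fun q => edist q.1 q.2) h
        refine ⟨edist q.1 q.2, edist_pos.2 (Finset.mem_offDiag.1 hq).2.2, fun x hx y hy hxy => ?_⟩
        exact hmin (x, y) (Finset.mem_offDiag.2 ⟨hx, hy, hxy⟩)
      · refine ⟨1, one_pos, fun x hx y hy hxy => ?_⟩
        have : (x, y) ∈ F.offDiag := Finset.mem_offDiag.2 ⟨hx, hy, hxy⟩
        simp [h] at this
    refine le_liminf_of_le (by isBoundedDefault) ?_
    filter_upwards [hlim.eventually (gt_mem_nhds hδ)] with m hm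
    have hidx : ∀ x ∈ F, ∃ j, x ∈ T m j := fun x hx => mem_iUnion.1 (hTA m (hF hx).1)
    choose! J hJ using hidx
    have hinj : Set.InjOn J F := by
      intro x hx y hy hxy
      by_contra hne
      have h1 := hsep x hx y hy hne
      have h2 : edist x y ≤ ediam (T m (J x)) :=
        edist_le_ediam_of_mem (hJ x hx) (hxy ▸ hJ y hy)
      exact absurd (h1.trans (h2.trans (hTd m _))) (not_le.2 hm)
    calc (F.card : ℝ≥0∞) = ∑ j ∈ F.image J, 1 := by
          rw [Finset.sum_const, Finset.card_image_of_injOn hinj]; simp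
      _ ≤ ∑ j ∈ F.image J, (closure (u '' T m j)).indicator (fun _ => 1) t := by
          refine Finset.sum_le_sum fun j hj => ?_
          obtain ⟨x, hx, rfl⟩ := Finset.mem_image.1 hj
          have : t ∈ closure (u '' T m (J x)) :=
            subset_closure ⟨x, hJ x hx, (hF hx).2⟩
          simp [this]
      _ ≤ N m t := ENNReal.sum_le_tsum _
  · refine (lintegral_liminf_le hNm).trans ?_
    have h3 : Tendsto (fun m : ℕ => μH[1] A + ((m : ℝ≥0∞) + 1)⁻¹) atTop (𝓝 (μH[1] A)) := by
      simpa using (tendsto_const_nhds (x := μH[1] A)).add hlim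
    calc liminf (fun m => ∫⁻ t, N m t) atTop
        ≤ liminf (fun m : ℕ => μH[1] A + ((m : ℝ≥0∞) + 1)⁻¹) atTop :=
          liminf_le_liminf (Eventually.of_forall hNi)
      _ = μH[1] A := h3.liminf_eq

/-- Almost every slice of a set of finite length is finite. -/
lemma ae_finite_slice (A : Set X) (u : X → ℝ) (hu : LipschitzWith 1 u) (hA : μH[1] A ≠ ⊤) :
    ∀ᵐ t : ℝ, (A ∩ u ⁻¹' {t}).Finite := by
  obtain ⟨G, hG, hGF, hGi⟩ := exists_slice_majorant A u hu
  filter_upwards [ae_lt_top hG (ne_top_of_le_ne_top hA hGi)] with t ht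
  by_contra hinf
  obtain ⟨k, hk⟩ := ENNReal.exists_nat_gt ht.ne
  obtain ⟨F, hF, hcard⟩ := Set.Infinite.exists_subset_card_eq hinf k
  have := hGF t F hF
  rw [hcard] at this
  exact absurd hk (not_lt.2 this)

/-- If almost every slice of `A` over `I` has at least `m` points, then `H¹(A) ≥ m |I|`. -/
lemma le_hausdorffMeasure_of_slices (A : Set X) (u : X → ℝ) (hu : LipschitzWith 1 u)
    (m : ℕ) (I : Set ℝ)
    (h : ∀ᵐ t : ℝ, t ∈ I → ∃ F : Finset X, (F : Set X) ⊆ A ∩ u ⁻¹' {t} ∧ m ≤ F.card)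
    (hI : MeasurableSet I) :
    (m : ℝ≥0∞) * volume I ≤ μH[1] A := by
  obtain ⟨G, hG, hGF, hGi⟩ := exists_slice_majorant A u hu
  refine le_trans ?_ hGi
  calc (m : ℝ≥0∞) * volume I = ∫⁻ _ in I, (m : ℝ≥0∞) := by simp
    _ ≤ ∫⁻ t in I, G t := by
        refine lintegral_mono_ae ((ae_restrict_iff' hI).2 ?_)
        filter_upwards [h] with t ht htI
        obtain ⟨F, hF, hm⟩ := ht htI
        exact le_trans (by exact_mod_cast hm) (hGF t F hF)
    _ ≤ ∫⁻ t, G t := setLIntegral_le_lintegral _ _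

end Slices

/-! ### Comparison with Lipschitz images -/

section Comparison

variable {n : ℕ} {E : Set (Euc n)}

/-- The cutoff `x ↦ min 1 (max 0 (d(x,P)/ε - 1))`: it vanishes where `d(x,P) ≤ ε` and equals `1`
where `d(x,P) ≥ 2ε`. -/
def cutoff (P : Set (Euc n)) (ε : ℝ) (x : Euc n) : ℝ := min 1 (max 0 (infDist x P / ε - 1))

lemma cutoff_nonneg (P : Set (Euc n)) (ε : ℝ) (x : Euc n) : 0 ≤ cutoff P ε x :=
  le_min zero_le_one (le_max_left _ _)

lemma cutoff_le_one (P : Set (Euc n)) (ε : ℝ) (x : Euc n) : cutoff P ε x ≤ 1 := min_le_left _ _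

lemma cutoff_eq_zero {P : Set (Euc n)} {ε : ℝ} (hε : 0 < ε) {x : Euc n} (h : infDist x P ≤ ε) :
    cutoff P ε x = 0 := by
  have : infDist x P / ε ≤ 1 := (div_le_one hε).2 h
  rw [cutoff, max_eq_left (by linarith)]; simp

lemma cutoff_eq_one {P : Set (Euc n)} {ε : ℝ} (hε : 0 < ε) {x : Euc n} (h : 2 * ε ≤ infDist x P) :
    cutoff P ε x = 1 := by
  have : 2 ≤ infDist x P / ε := (le_div_iff₀ hε).2 h
  rw [cutoff, max_eq_right (by linarith), min_eq_left (by linarith)]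

lemma abs_cutoff_sub_le (P : Set (Euc n)) {ε : ℝ} (hε : 0 < ε) (x y : Euc n) :
    |cutoff P ε x - cutoff P ε y| ≤ dist x y / ε := by
  have h1 : |infDist x P - infDist y P| ≤ dist x y := by
    have := (lipschitz_infDist_pt P).dist_le_mul x y
    simpa [Real.dist_eq] using this
  calc |cutoff P ε x - cutoff P ε y|
      ≤ |max 0 (infDist x P / ε - 1) - max 0 (infDist y P / ε - 1)| := by
        unfold cutoff
        simpa using abs_min_sub_min_le_max 1 (max 0 (infDist x P / ε - 1)) 1
          (max 0 (infDist y P / ε - 1))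
    _ ≤ |(infDist x P / ε - 1) - (infDist y P / ε - 1)| := by
        simpa using abs_max_sub_max_le_max 0 (infDist x P / ε - 1) 0 (infDist y P / ε - 1)
    _ = |infDist x P - infDist y P| / ε := by
        rw [← abs_of_pos hε, ← abs_div, abs_of_pos hε]; congr 1; ring
    _ ≤ dist x y / ε := by gcongr

/-- The map that equals the identity near `P`, equals `f` away from `P`, and interpolates between
the two in between. -/
def interp (P : Set (Euc n)) (f : Euc n → Euc n) (ε : ℝ) (x : Euc n) : Euc n :=
  x + cutoff P ε x • (f x - x)

lemma dist_interp_le {P : Set (Euc n)} {f : Euc n → Euc n} {ε : ℝ} (hε : 0 < ε) {L D : ℝ}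
    {x y : Euc n} (hf : dist (f x) (f y) ≤ L * dist x y) (hD : dist (f x) x ≤ D) :
    dist (interp P f ε x) (interp P f ε y) ≤ (2 + L + D / ε) * dist x y := by
  have h0 := cutoff_nonneg P ε y
  have h1 := cutoff_le_one P ε y
  have h2 := abs_cutoff_sub_le P hε x y
  have e : interp P f ε x - interp P f ε y = (x - y) + (cutoff P ε x - cutoff P ε y) • (f x - x)
      + cutoff P ε y • ((f x - f y) - (x - y)) := by
    simp only [interp]; module
  rw [dist_eq_norm, e]
  rw [dist_eq_norm] at hf hD h2 ⊢
  have h3 : ‖(cutoff P ε x - cutoff P ε y) • (f x - x)‖ ≤ ‖x - y‖ / ε * D := by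
    rw [norm_smul, Real.norm_eq_abs]
    gcongr
  have h4 : ‖cutoff P ε y • ((f x - f y) - (x - y))‖ ≤ 1 * (L * ‖x - y‖ + ‖x - y‖) := by
    rw [norm_smul, Real.norm_eq_abs, abs_of_nonneg h0]
    gcongr
    exact (norm_sub_le _ _).trans (by gcongr; exact hf)
  calc _ ≤ ‖x - y‖ + ‖x - y‖ / ε * D + 1 * (L * ‖x - y‖ + ‖x - y‖) := by
        refine (norm_add₃_le).trans ?_
        gcongr
    _ = _ := by ring

/-- Comparison principle. Let `K ⊆ E` be compact, with `K` and `E ∖ K` touching only at the finite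
set `P`. A Lipschitz map fixing `P` cannot decrease the length of `K`. The map is glued to the
identity near `P`, at a cost in length that tends to zero with the size of the neighbourhood. -/
lemma IsMinimalSet.le_image (hE : IsMinimalSet n 1 E) {K P : Set (Euc n)} (hKE : K ⊆ E)
    (hK : IsCompact K) (hPK : P ⊆ K) (hP : P.Finite) (hPne : P.Nonempty)
    (hcl : closure (E \ K) ∩ K ⊆ P) (f : Euc n → Euc n) {L : ℝ≥0} (hf : LipschitzWith L f)
    (hfP : ∀ p ∈ P, f p = p) : μH[1] K ≤ μH[1] (f '' K) := by
  obtain ⟨hclosed, hloc, hmin⟩ := hE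
  simp only [Nat.cast_one] at hloc hmin
  obtain ⟨R, hR0, hKR⟩ : ∃ R : ℝ, 0 < R ∧ K ⊆ ball 0 R := by
    obtain ⟨R, hR⟩ := hK.isBounded.subset_ball (0 : Euc n)
    exact ⟨max R 1, by positivity, hR.trans (ball_subset_ball (le_max_left _ _))⟩
  have hKfin : μH[1] K ≠ ⊤ :=
    ((measure_mono (subset_inter hKE hKR)).trans_lt (hloc R hR0)).ne
  -- `d(f x, x)` is controlled by the distance to `P`, and is bounded on `K`.
  have hdisp : ∀ x, dist (f x) x ≤ (L + 1) * infDist x P := by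
    intro x
    obtain ⟨p, hp, hxp⟩ := hP.isCompact.exists_infDist_eq_dist hPne x
    rw [hxp]
    have h1 := hf.dist_le_mul x p
    rw [hfP p hp] at h1
    have := dist_triangle_right (f x) x p
    linarith
  obtain ⟨D, hD⟩ : ∃ D : ℝ, ∀ x ∈ K, infDist x P ≤ D := by
    obtain ⟨D, hD⟩ := hK.bddAbove_image (continuous_infDist_pt P).continuousOn
    exact ⟨D, fun x hx => hD (mem_image_of_mem _ hx)⟩
  let Kε : ℝ → Set (Euc n) := fun ε => K ∩ {x | infDist x P ≤ 2 * ε}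
  have hstep : ∀ ε : ℝ, 0 < ε → μH[1] K ≤ μH[1] (f '' K) +
      2 * (((3 * L + 4 : ℝ≥0) : ℝ≥0∞) * μH[1] (Kε ε)) := by
    intro ε hε
    let W : Set (Euc n) := (E \ K) ∪ (ball 0 R)ᶜ
    have hWcl : closure W ∩ K ⊆ P := by
      rintro x ⟨hx, hxK⟩
      rw [closure_union, isOpen_ball.isClosed_compl.closure_eq] at hx
      rcases hx with hx | hx
      · exact hcl ⟨hx, hxK⟩
      · exact absurd (hKR hxK) hx
    have hdisj : Disjoint (K ∩ {x | ε ≤ infDist x P}) (closure W) := by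
      rw [Set.disjoint_left]
      rintro x ⟨hxK, hx⟩ hxW
      have : infDist x P = 0 := infDist_zero_of_mem (hWcl ⟨hxW, hxK⟩)
      simp only [mem_ofPred_eq, this] at hx
      linarith
    have hK1 : IsCompact (K ∩ {x | ε ≤ infDist x P}) :=
      hK.inter_right (isClosed_le continuous_const (continuous_infDist_pt P))
    obtain ⟨δ, hδ, hδd⟩ := (hdisj.exists_thickenings hK1 isClosed_closure)
    have hsepd : ∀ x ∈ K, ε ≤ infDist x P → ∀ y ∈ W, δ ≤ dist x y := by
      intro x hxK hx y hy
      by_contra hlt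
      push Not at hlt
      exact Set.disjoint_left.1 hδd
        (mem_thickening_iff.2 ⟨x, ⟨hxK, hx⟩, by rwa [dist_comm]⟩)
        (self_subset_thickening hδ _ (subset_closure hy))
    classical
    let φ₀ : Euc n → Euc n := fun x => if x ∈ K then interp P f ε x else x
    have hD0 : 0 ≤ D := by
      obtain ⟨p, hp⟩ := hPne
      exact infDist_nonneg.trans (hD p (hPK hp))
    let C : ℝ := 2 + L + (L + 1) * D / ε + (L + 1) * D / δ
    have hC0 : 0 ≤ C := by positivity
    have hmix : ∀ x ∈ K, ∀ y ∈ W, dist (interp P f ε x) y ≤ C * dist x y := by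
      intro x hx y hy
      have hdx : dist (interp P f ε x) x ≤ (L + 1) * D := by
        simp only [interp, dist_self_add_left, norm_smul, Real.norm_eq_abs,
          abs_of_nonneg (cutoff_nonneg P ε x)]
        calc _ ≤ 1 * dist (f x) x := by
              rw [dist_eq_norm]; gcongr; exact cutoff_le_one _ _ _
          _ ≤ (L + 1) * D := by
              rw [one_mul]; exact (hdisp x).trans (by gcongr; exact hD x hx)
      have hd0 : 0 ≤ dist x y := dist_nonneg
      rcases le_total (infDist x P) ε with h | h
      · rw [interp, cutoff_eq_zero hε h, zero_smul, add_zero]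
        have : 1 ≤ C := by
          have : 0 ≤ (L:ℝ) + (L + 1) * D / ε + (L + 1) * D / δ := by positivity
          simp only [C]; linarith
        nlinarith
      · have h5 := hsepd x hx h y hy
        have h6 : (L + 1) * D ≤ (L + 1) * D / δ * dist x y := by
          rw [div_mul_eq_mul_div, le_div_iff₀ hδ]; gcongr
        have h7 : 0 ≤ (1 + (L:ℝ) + (L + 1) * D / ε) * dist x y := by positivity
        calc _ ≤ dist (interp P f ε x) x + dist x y := dist_triangle _ _ _
          _ ≤ (L + 1) * D / δ * dist x y + dist x y := by linarith
          _ ≤ C * dist x y := by simp only [C]; nlinarith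
    have hLip : LipschitzOnWith C.toNNReal φ₀ (K ∪ W) := by
      refine LipschitzOnWith.of_dist_le_mul fun x hx y hy => ?_
      rw [Real.coe_toNNReal C hC0]
      by_cases hxK : x ∈ K <;> by_cases hyK : y ∈ K
      · simp only [φ₀, hxK, hyK, if_true]
        have hdx : dist (f x) x ≤ (L + 1) * D := (hdisp x).trans (by gcongr; exact hD x hxK)
        refine (dist_interp_le hε (hf.dist_le_mul x y) hdx).trans ?_
        gcongr
        have : 0 ≤ (L + 1) * D / δ := by positivity
        simp only [C]; linarith
      · simp only [φ₀, hxK, hyK, if_true, if_false]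
        exact hmix x hxK y (hy.resolve_left hyK)
      · simp only [φ₀, hxK, hyK, if_true, if_false]
        rw [dist_comm, dist_comm x y]
        exact hmix y hyK x (hx.resolve_left hxK)
      · simp only [φ₀, hxK, hyK, if_false]
        have : 1 ≤ C := by
          have : 0 ≤ (L:ℝ) + (L + 1) * D / ε + (L + 1) * D / δ := by positivity
          simp only [C]; linarith
        have hd0 : 0 ≤ dist x y := dist_nonneg
        nlinarith
    obtain ⟨φ, hφ, hφeq⟩ := hLip.extend_finite_dimension
    have hφK : ∀ x ∈ K, φ x = interp P f ε x := fun x hx => by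
      rw [← hφeq (Or.inl hx)]; simp [φ₀, hx]
    have hφid : ∀ x ∈ W, x ∉ K → φ x = x := fun x hx hxK => by
      rw [← hφeq (Or.inr hx)]; simp [φ₀, hxK]
    have hbdd : IsBounded {x | φ x ≠ x} := by
      refine isBounded_ball.subset (t := ball 0 R) fun x hx => ?_
      by_contra hxR
      exact hx (hφid x (Or.inr hxR) fun hxK => hxR (hKR hxK))
    have key := hmin φ ⟨_, hφ⟩ hbdd
    let S : Set (Euc n) := φ '' (Kε ε)
    have hS : μH[1] S ≤ ((3 * L + 4 : ℝ≥0) : ℝ≥0∞) * μH[1] (Kε ε) := by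
      have hL1 : LipschitzOnWith (3 * L + 4) φ (Kε ε) := by
        refine LipschitzOnWith.of_dist_le_mul fun x hx y hy => ?_
        rw [hφK x hx.1, hφK y hy.1]
        have h8 : dist (f x) x ≤ (L + 1) * (2 * ε) :=
          (hdisp x).trans (by gcongr; exact hx.2)
        refine (dist_interp_le hε (hf.dist_le_mul x y) h8).trans (le_of_eq ?_)
        push_cast
        field_simp
        ring
      simpa using hL1.hausdorffMeasure_image_le zero_le_one
    have himg : φ '' E ⊆ (E \ K) ∪ (f '' K) ∪ S := by
      rintro _ ⟨x, hx, rfl⟩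
      by_cases hxK : x ∈ K
      · rcases le_total (infDist x P) (2 * ε) with h | h
        · exact Or.inr ⟨x, ⟨hxK, h⟩, rfl⟩
        · refine Or.inl (Or.inr ⟨x, hxK, ?_⟩)
          rw [hφK x hxK, interp, cutoff_eq_one hε h]; simp
      · exact Or.inl (Or.inl (by rw [hφid x (Or.inl ⟨hx, hxK⟩) hxK]; exact ⟨hx, hxK⟩))
    have h9 : μH[1] (φ '' E \ E) ≤ μH[1] (f '' K \ K) + μH[1] S := by
      refine (measure_mono ?_).trans (measure_union_le _ _)
      rintro x ⟨hx, hxE⟩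
      rcases himg hx with (h | h) | h
      · exact absurd h.1 hxE
      · exact Or.inl ⟨h, fun hxK => hxE (hKE hxK)⟩
      · exact Or.inr h
    have h10 : K ⊆ (f '' K ∩ K) ∪ (E \ φ '' E) ∪ S := by
      intro x hx
      by_cases h : x ∈ φ '' E
      · rcases himg h with (h | h) | h
        · exact absurd hx h.2
        · exact Or.inl (Or.inl ⟨h, hx⟩)
        · exact Or.inr h
      · exact Or.inl (Or.inr ⟨hKE hx, h⟩)
    calc μH[1] K ≤ μH[1] (f '' K ∩ K) + μH[1] (E \ φ '' E) + μH[1] S :=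
          (measure_mono h10).trans ((measure_union_le _ _).trans
            (add_le_add_left (measure_union_le _ _) _))
      _ ≤ μH[1] (f '' K ∩ K) + (μH[1] (f '' K \ K) + μH[1] S) + μH[1] S := by
          gcongr; exact key.trans h9
      _ = μH[1] (f '' K) + 2 * μH[1] S := by
          rw [← measure_inter_add_sdiff (f '' K) hK.measurableSet]; ring
      _ ≤ _ := by gcongr
  -- Let `ε → 0`: the sets `Kε` decrease to `P`, which is finite, hence null.
  have hnull : μH[1] P = 0 := by
    have := Measure.nullSingletonClass_hausdorff (Euc n) (zero_lt_one (α := ℝ))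
    exact hP.measure_zero _
  let e : ℕ → ℝ := fun j => 1 / ((j : ℝ) + 1)
  have he : Tendsto e atTop (𝓝 0) := tendsto_one_div_add_atTop_nhds_zero_nat
  have hanti : Antitone fun j => Kε (e j) := by
    intro i j hij x hx
    have h1 : infDist x P ≤ 2 * e j := hx.2
    have h2 : e j ≤ e i := Nat.one_div_le_one_div hij
    exact ⟨hx.1, h1.trans (by linarith)⟩
  have hinter : ⋂ j, Kε (e j) = P := by
    ext x
    simp only [mem_iInter]
    constructor
    · intro hx
      have h1 : infDist x P ≤ 0 := by
        refine ge_of_tendsto (by simpa using he.const_mul 2)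
          (Eventually.of_forall fun j => (hx j).2)
      exact (hP.isClosed.mem_iff_infDist_zero hPne).2 (le_antisymm h1 infDist_nonneg)
    · intro hx j
      refine ⟨hPK hx, ?_⟩
      rw [mem_ofPred_eq, infDist_zero_of_mem hx]
      positivity
  have htend : Tendsto (fun j => μH[1] (Kε (e j))) atTop (𝓝 0) := by
    rw [← hnull, ← hinter]
    refine tendsto_measure_iInter_atTop (fun j => ?_) hanti ⟨0, ?_⟩
    · exact (hK.isClosed.inter (isClosed_le (continuous_infDist_pt P)
        continuous_const)).measurableSet.nullMeasurableSet
    · exact ne_top_of_le_ne_top hKfin (measure_mono inter_subset_left)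
  have hlim : Tendsto (fun j => μH[1] (f '' K) +
      2 * (((3 * L + 4 : ℝ≥0) : ℝ≥0∞) * μH[1] (Kε (e j)))) atTop (𝓝 (μH[1] (f '' K))) := by
    have h1 := ENNReal.Tendsto.const_mul (a := ((3 * L + 4 : ℝ≥0) : ℝ≥0∞)) htend
      (Or.inr ENNReal.coe_ne_top)
    have h2 := ENNReal.Tendsto.const_mul (a := 2) h1 (Or.inr (by simp))
    simpa using (tendsto_const_nhds (x := μH[1] (f '' K))).add h2
  exact ge_of_tendsto hlim (Eventually.of_forall fun j => hstep (e j) (by positivity))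

end Comparison

/-! ### Comparison with polygonal networks -/

section Networks

variable {n : ℕ} {E : Set (Euc n)}

lemma hausdorffMeasure_one_singleton (x : Euc n) : μH[1] ({x} : Set (Euc n)) = 0 := by
  have := Measure.nullSingletonClass_hausdorff (Euc n) (zero_lt_one (α := ℝ))
  exact measure_singleton x

/-- The polygonal path `p → m → o`, run on `[0, 2]` and constant afterwards. -/
def brokenPath (p m o : Euc n) (s : ℝ) : Euc n :=
  p + min 1 s • (m - p) + min 1 (max 0 (s - 1)) • (o - m)

lemma brokenPath_zero (p m o : Euc n) : brokenPath p m o 0 = p := by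
  simp [brokenPath]

lemma brokenPath_of_two_le (p m o : Euc n) {s : ℝ} (hs : 2 ≤ s) : brokenPath p m o s = o := by
  rw [brokenPath, min_eq_left (by linarith), max_eq_right (by linarith), min_eq_left (by linarith)]
  simp

lemma brokenPath_mem (p m o : Euc n) {s : ℝ} (hs : 0 ≤ s) :
    brokenPath p m o s ∈ segment ℝ p (m) ∪ segment ℝ m o := by
  rcases le_total s 1 with h | h
  · left
    rw [brokenPath, max_eq_left (by linarith), min_eq_right h, segment_eq_image']
    exact ⟨s, ⟨hs, h⟩, by simp⟩
  · right
    rw [brokenPath, max_eq_right (by linarith), min_eq_left h, segment_eq_image']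
    exact ⟨min 1 (s - 1), ⟨le_min zero_le_one (by linarith), min_le_left _ _⟩, by simp⟩

lemma exists_lipschitz_brokenPath (p m o : Euc n) {ε : ℝ} (hε : 0 < ε) :
    ∃ L, LipschitzWith L fun x => brokenPath p m o (dist x p / ε) := by
  have h1 : LipschitzWith (ε⁻¹).toNNReal fun x : Euc n => dist x p / ε := by
    refine LipschitzWith.of_dist_le_mul fun x y => ?_
    rw [Real.coe_toNNReal _ (by positivity), Real.dist_eq, ← sub_div, abs_div, abs_of_pos hε,
      div_eq_inv_mul]
    gcongr
    exact abs_dist_sub_le x y p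
  have h2 := h1.const_min 1
  have h3 := ((h1.sub (LipschitzWith.const (1 : ℝ))).const_max 0).const_min 1
  have h4 := (ContinuousLinearMap.toSpanSingleton ℝ (m - p)).lipschitz.comp h2
  have h5 := (ContinuousLinearMap.toSpanSingleton ℝ (o - m)).lipschitz.comp h3
  exact ⟨_, ((LipschitzWith.const p).add h4).add h5⟩

lemma exists_lipschitz_sum {ι : Type*} (s : Finset ι) (g : ι → Euc n → Euc n)
    (hg : ∀ i, ∃ L, LipschitzWith L (g i)) : ∃ L, LipschitzWith L fun x => ∑ i ∈ s, g i x := by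
  classical
  induction s using Finset.induction_on with
  | empty => exact ⟨0, by simp⟩
  | insert i s his ih =>
    obtain ⟨L, hL⟩ := ih
    obtain ⟨L', hL'⟩ := hg i
    exact ⟨_, by simpa only [Finset.sum_insert his] using hL'.add hL⟩

/-- If `K ⊆ E` is attached to the rest of `E` only at the finite set `P`, then `K` is not longer
than any network made of broken paths `p → m p → o`, `p ∈ P`, to a common point `o`. The
competitor sends most of `K` to `o` and stretches small balls around the points of `P` along the
paths. -/
lemma IsMinimalSet.le_network (hE : IsMinimalSet n 1 E) {K : Set (Euc n)} (hKE : K ⊆ E)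
    (hK : IsCompact K) (P : Finset (Euc n)) (hPK : (P : Set (Euc n)) ⊆ K)
    (hcl : closure (E \ K) ∩ K ⊆ P) (o : Euc n) (m : Euc n → Euc n) :
    μH[1] K ≤ ENNReal.ofReal (∑ p ∈ P, dist p (m p) + ∑ q ∈ P.image m, dist q o) := by
  rcases P.eq_empty_or_nonempty with rfl | hPne
  · rcases K.eq_empty_or_nonempty with rfl | ⟨y, hy⟩
    · simp
    · have h := hE.le_image (P := {y}) hKE hK (by simpa using hy) (finite_singleton y)
        (singleton_nonempty y) (hcl.trans (by simp)) (fun _ => y) (LipschitzWith.const y)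
        (by simp)
      refine h.trans ((measure_mono (t := {y}) ?_).trans ?_)
      · rintro _ ⟨x, -, rfl⟩; rfl
      · simp [hausdorffMeasure_one_singleton]
  obtain ⟨ε, hε, hsep⟩ : ∃ ε : ℝ, 0 < ε ∧ ∀ x ∈ P, ∀ y ∈ P, x ≠ y → 4 * ε ≤ dist x y := by
    rcases P.offDiag.eq_empty_or_nonempty with h | h
    · refine ⟨1, one_pos, fun x hx y hy hxy => ?_⟩
      have : (x, y) ∈ P.offDiag := Finset.mem_offDiag.2 ⟨hx, hy, hxy⟩
      simp [h] at this
    · obtain ⟨q, hq, hmin⟩ := P.offDiag.exists_min_image (fun q => dist q.1 q.2) h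
      have h0 : 0 < dist q.1 q.2 := dist_pos.2 (Finset.mem_offDiag.1 hq).2.2
      refine ⟨dist q.1 q.2 / 4, by positivity, fun x hx y hy hxy => ?_⟩
      have := hmin (x, y) (Finset.mem_offDiag.2 ⟨hx, hy, hxy⟩)
      simp only at this
      linarith
  let g : Euc n → Euc n → Euc n := fun p x => brokenPath p (m p) o (dist x p / ε) - o
  have hg0 : ∀ p x, 2 * ε ≤ dist x p → g p x = 0 := fun p x h => by
    simp only [g]
    rw [brokenPath_of_two_le _ _ _ ((le_div_iff₀ hε).2 h), sub_self]
  obtain ⟨L, hL⟩ := exists_lipschitz_sum P g fun p => by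
    obtain ⟨L, hL⟩ := exists_lipschitz_brokenPath p (m p) o hε
    exact ⟨_, hL.sub (LipschitzWith.const o)⟩
  let f : Euc n → Euc n := fun x => o + ∑ p ∈ P, g p x
  have hf : LipschitzWith (0 + L) f := (LipschitzWith.const o).add hL
  -- At most one summand is nonzero at each point.
  have hnear : ∀ p ∈ P, ∀ x, dist x p < 2 * ε → f x = brokenPath p (m p) o (dist x p / ε) := by
    intro p hp x hx
    have : ∑ q ∈ P, g q x = g p x := by
      refine Finset.sum_eq_single_of_mem p hp fun q hq hqp => hg0 q x ?_
      have h1 := hsep q hq p hp hqp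
      have h2 := dist_triangle_left q p x
      linarith
    simp only [f, this, g]
    abel
  have hfP : ∀ p ∈ (P : Set (Euc n)), f p = p := by
    intro p hp
    rw [hnear p hp p (by rw [dist_self]; positivity), dist_self, zero_div, brokenPath_zero]
  have himg : f '' K ⊆ {o} ∪ ((⋃ p ∈ P, segment ℝ p (m p)) ∪ ⋃ q ∈ P.image m, segment ℝ q o) := by
    rintro _ ⟨x, -, rfl⟩
    by_cases h : ∃ p ∈ P, dist x p < 2 * ε
    · obtain ⟨p, hp, hx⟩ := h
      rw [hnear p hp x hx]
      rcases brokenPath_mem p (m p) o (s := dist x p / ε) (by positivity) with h | h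
      · exact Or.inr (Or.inl (mem_iUnion₂.2 ⟨p, hp, h⟩))
      · exact Or.inr (Or.inr (mem_iUnion₂.2 ⟨m p, Finset.mem_image_of_mem m hp, h⟩))
    · push Not at h
      left
      simp only [f]
      rw [Finset.sum_eq_zero fun p hp => hg0 p x (h p hp)]
      simp
  have hseg : ∀ a b : Euc n, μH[1] (segment ℝ a b) = ENNReal.ofReal (dist a b) := fun a b => by
    rw [hausdorffMeasure_segment, edist_dist]
  calc μH[1] K ≤ μH[1] (f '' K) :=
        hE.le_image hKE hK hPK P.finite_toSet hPne hcl f hf hfP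
    _ ≤ μH[1] {o} + (∑ p ∈ P, μH[1] (segment ℝ p (m p))
          + ∑ q ∈ P.image m, μH[1] (segment ℝ q o)) := by
        refine (measure_mono himg).trans ((measure_union_le _ _).trans ?_)
        gcongr
        refine (measure_union_le _ _).trans ?_
        gcongr <;> exact measure_biUnion_finset_le _ _
    _ = _ := by
        rw [hausdorffMeasure_one_singleton, zero_add]
        simp only [hseg]
        rw [ENNReal.ofReal_add (Finset.sum_nonneg fun _ _ => dist_nonneg)
          (Finset.sum_nonneg fun _ _ => dist_nonneg),
          ENNReal.ofReal_sum_of_nonneg fun _ _ => dist_nonneg,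
          ENNReal.ofReal_sum_of_nonneg fun _ _ => dist_nonneg]

end Networks

/-! ### Length in balls and monotonicity -/

section Mass

variable {n : ℕ} {E : Set (Euc n)}

/-- The length of `E` in the closed ball `B̄(x,r)`, as a real number. -/
def mass (E : Set (Euc n)) (x : Euc n) (r : ℝ) : ℝ := (μH[1] (E ∩ closedBall x r)).toReal

lemma IsMinimalSet.measure_ne_top (hE : IsMinimalSet n 1 E) {A : Set (Euc n)} (hA : A ⊆ E)
    (hb : IsBounded A) : μH[1] A ≠ ⊤ := by
  obtain ⟨R, hR⟩ := hb.subset_ball (0 : Euc n)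
  have h := hE.2.1 (max R 1) (by positivity)
  rw [Nat.cast_one] at h
  exact ((measure_mono (subset_inter hA
    (hR.trans (ball_subset_ball (le_max_left _ _))))).trans_lt h).ne

lemma IsMinimalSet.ball_ne_top (hE : IsMinimalSet n 1 E) (x : Euc n) (r : ℝ) :
    μH[1] (E ∩ closedBall x r) ≠ ⊤ :=
  hE.measure_ne_top inter_subset_left (isBounded_closedBall.subset inter_subset_right)

lemma mass_nonneg (x : Euc n) (r : ℝ) : 0 ≤ mass E x r := ENNReal.toReal_nonneg

lemma IsMinimalSet.mass_mono (hE : IsMinimalSet n 1 E) (x : Euc n) {r s : ℝ} (h : r ≤ s) :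
    mass E x r ≤ mass E x s :=
  ENNReal.toReal_mono (hE.ball_ne_top x s)
    (measure_mono (inter_subset_inter_right _ (closedBall_subset_closedBall h)))

lemma lipschitz_dist_to (x : Euc n) : LipschitzWith 1 fun y => dist y x :=
  LipschitzWith.dist_left x

lemma IsMinimalSet.ae_finite_sphere (hE : IsMinimalSet n 1 E) (x : Euc n) :
    ∀ᵐ t : ℝ, (E ∩ sphere x t).Finite := by
  have h : ∀ N : ℕ, ∀ᵐ t : ℝ, ((E ∩ closedBall x N) ∩ (fun y => dist y x) ⁻¹' {t}).Finite :=
    fun N => ae_finite_slice _ _ (lipschitz_dist_to x) (hE.ball_ne_top x N)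
  filter_upwards [ae_all_iff.2 h] with t ht
  obtain ⟨N, hN⟩ := exists_nat_ge t
  refine (ht N).subset fun y hy => ?_
  have hy2 : dist y x = t := hy.2
  exact ⟨⟨hy.1, by rw [mem_closedBall, hy2]; exact hN⟩, hy2⟩

/-- The comparison with networks, for the part of `E` in a ball. -/
lemma IsMinimalSet.mass_le_network (hE : IsMinimalSet n 1 E) {x : Euc n} {t : ℝ}
    {P : Finset (Euc n)} (hP : (P : Set (Euc n)) = E ∩ sphere x t) (o : Euc n)
    (m : Euc n → Euc n) :
    mass E x t ≤ ∑ p ∈ P, dist p (m p) + ∑ q ∈ P.image m, dist q o := by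
  refine ENNReal.toReal_le_of_le_ofReal
    (add_nonneg (Finset.sum_nonneg fun _ _ => dist_nonneg)
      (Finset.sum_nonneg fun _ _ => dist_nonneg))
    (hE.le_network inter_subset_left ?_ P ?_ ?_ o m)
  · exact (isCompact_closedBall x t).inter_left hE.1
  · rw [hP]; exact inter_subset_inter_right _ sphere_subset_closedBall
  · rw [hP]
    rintro y ⟨hy, hyE, hyt⟩
    refine ⟨hyE, le_antisymm hyt ?_⟩
    have h1 : closure (E \ (E ∩ closedBall x t)) ⊆ {y | t ≤ dist y x} := by
      refine closure_minimal ?_ (isClosed_le continuous_const (continuous_id.dist continuous_const))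
      rintro z ⟨hzE, hz⟩
      rw [mem_ofPred_eq]
      by_contra hlt
      exact hz ⟨hzE, mem_closedBall.2 (not_le.1 hlt).le⟩
    exact h1 hy

/-- If almost every sphere `∂B(x,t)`, `a < t < b`, meets `S ⊆ E` in at least `m` points, then `S`
has length at least `m (b - a)` in the shell. -/
lemma IsMinimalSet.le_measure_shell (hE : IsMinimalSet n 1 E) (x : Euc n) (S : Set (Euc n))
    {a b : ℝ} (m : ℕ)
    (h : ∀ t ∈ Ioo a b, ∀ P : Finset (Euc n), (P : Set (Euc n)) = E ∩ sphere x t →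
      ∃ F : Finset (Euc n), (F : Set (Euc n)) ⊆ S ∩ sphere x t ∧ m ≤ F.card) :
    ENNReal.ofReal (m * (b - a)) ≤ μH[1] (S ∩ {y | a < dist y x ∧ dist y x ≤ b}) := by
  have h1 := le_hausdorffMeasure_of_slices (S ∩ {y | a < dist y x ∧ dist y x ≤ b})
    (fun y => dist y x) (lipschitz_dist_to x) m (Ioo a b) ?_ measurableSet_Ioo
  · rwa [Real.volume_Ioo, ← ENNReal.ofReal_natCast, ← ENNReal.ofReal_mul (by positivity)] at h1
  · filter_upwards [hE.ae_finite_sphere x] with t ht htI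
    obtain ⟨F, hF, hm⟩ := h t htI ht.toFinset (by simp)
    refine ⟨F, fun y hy => ?_, hm⟩
    obtain ⟨hyS, hyt⟩ := hF hy
    have hyt : dist y x = t := hyt
    exact ⟨⟨hyS, by simp only [mem_ofPred_eq, hyt]; exact ⟨htI.1, htI.2.le⟩⟩, hyt⟩

lemma IsMinimalSet.mass_shell (hE : IsMinimalSet n 1 E) (x : Euc n) {a b : ℝ} (hab : a ≤ b) :
    μH[1] (E ∩ {y | a < dist y x ∧ dist y x ≤ b}) = ENNReal.ofReal (mass E x b - mass E x a) := by
  have hset : E ∩ closedBall x b =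
      (E ∩ closedBall x a) ∪ (E ∩ {y | a < dist y x ∧ dist y x ≤ b}) := by
    ext y
    simp only [mem_inter_iff, mem_union, mem_closedBall, mem_ofPred_eq]
    constructor
    · rintro ⟨h1, h2⟩
      rcases le_or_gt (dist y x) a with h | h
      · exact Or.inl ⟨h1, h⟩
      · exact Or.inr ⟨h1, h, h2⟩
    · rintro (⟨h1, h2⟩ | ⟨h1, -, h2⟩)
      · exact ⟨h1, h2.trans hab⟩
      · exact ⟨h1, h2⟩
  have hdisj : Disjoint (E ∩ {y | a < dist y x ∧ dist y x ≤ b}) (E ∩ closedBall x a) := by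
    rw [Set.disjoint_left]
    rintro y ⟨-, h1, -⟩ ⟨-, h2⟩
    exact absurd h1 (not_lt.2 h2)
  have hsum := measure_union' (μ := μH[1]) hdisj.symm (hE.1.inter isClosed_closedBall).measurableSet
  rw [← hset] at hsum
  have hfin : μH[1] (E ∩ {y | a < dist y x ∧ dist y x ≤ b}) ≠ ⊤ :=
    ne_top_of_le_ne_top (hE.ball_ne_top x b) (by rw [hsum]; exact le_add_self)
  rw [mass, mass, hsum, ENNReal.toReal_add (hE.ball_ne_top x a) hfin, add_sub_cancel_left,
    ENNReal.ofReal_toReal hfin]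

/-- If the spheres `∂B(x,t)`, `a < t < b`, meet `E` in at least `m` points whenever they meet it
in finitely many points, then the length grows at least by `m (b - a)`. -/
lemma IsMinimalSet.mass_growth (hE : IsMinimalSet n 1 E) (x : Euc n) {a b : ℝ} (hab : a ≤ b)
    (m : ℕ) (h : ∀ t ∈ Ioo a b, ∀ P : Finset (Euc n), (P : Set (Euc n)) = E ∩ sphere x t →
      m ≤ P.card) : mass E x a + m * (b - a) ≤ mass E x b := by
  have h1 := hE.le_measure_shell x E (a := a) (b := b) m fun t ht P hP =>
    ⟨P, hP.subset, h t ht P hP⟩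
  rw [hE.mass_shell x hab] at h1
  have h2 : 0 ≤ mass E x b - mass E x a := sub_nonneg.2 (hE.mass_mono x hab)
  have := (ENNReal.ofReal_le_ofReal_iff h2).1 h1
  linarith

/-- A real lower bound on the number of points may be rounded up. -/
lemma IsMinimalSet.mass_growth_real (hE : IsMinimalSet n 1 E) (x : Euc n) {a b : ℝ} (hab : a ≤ b)
    (c : ℝ) (h : ∀ t ∈ Ioo a b, ∀ P : Finset (Euc n), (P : Set (Euc n)) = E ∩ sphere x t →
      c ≤ P.card) : mass E x a + c * (b - a) ≤ mass E x b := by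
  have h1 := hE.mass_growth x hab ⌈c⌉₊ fun t ht P hP => Nat.ceil_le.2 (h t ht P hP)
  have h2 := Nat.le_ceil c
  have h3 : c * (b - a) ≤ ⌈c⌉₊ * (b - a) :=
    mul_le_mul_of_nonneg_right h2 (sub_nonneg.2 hab)
  linarith

/-- Comparison with the cone over `E ∩ ∂B(x,t)`. -/
lemma IsMinimalSet.mass_le_card (hE : IsMinimalSet n 1 E) {x : Euc n} {t : ℝ}
    {P : Finset (Euc n)} (hP : (P : Set (Euc n)) = E ∩ sphere x t) :
    mass E x t ≤ t * P.card := by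
  refine (hE.mass_le_network hP x fun _ => x).trans (le_of_eq ?_)
  have h1 : ∑ q ∈ P.image (fun _ => x), dist q x = 0 := by
    refine Finset.sum_eq_zero fun q hq => ?_
    obtain ⟨_, -, rfl⟩ := Finset.mem_image.1 hq
    exact dist_self _
  have h2 : ∑ p ∈ P, dist p x = ∑ p ∈ P, t := by
    refine Finset.sum_congr rfl fun p hp => ?_
    have : p ∈ E ∩ sphere x t := hP ▸ hp
    exact this.2
  rw [h1, h2, Finset.sum_const, nsmul_eq_mul]
  ring

/-- Monotonicity: `r ↦ H¹(E ∩ B̄(x,r)) / r` is nondecreasing. -/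
lemma IsMinimalSet.monotonicity (hE : IsMinimalSet n 1 E) (x : Euc n) {a b : ℝ} (ha : 0 < a)
    (hab : a ≤ b) : mass E x a / a ≤ mass E x b / b := by
  let S : Set ℝ := (fun t => mass E x t / t) '' Icc a b
  have hSb : BddBelow S := by
    refine ⟨0, ?_⟩
    rintro _ ⟨t, ht, rfl⟩
    exact div_nonneg (mass_nonneg x t) (ha.le.trans ht.1)
  have hSne : S.Nonempty := ⟨_, a, ⟨le_rfl, hab⟩, rfl⟩
  set μ := sInf S with hμ
  have hμle : ∀ t ∈ Icc a b, μ ≤ mass E x t / t := fun t ht => csInf_le hSb ⟨t, ht, rfl⟩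
  set q := mass E x a / a with hq
  have hqa : mass E x a = q * a := by rw [hq]; field_simp
  have hμq : μ ≤ q := hμle a ⟨le_rfl, hab⟩
  -- The infimum `μ` of the ratio over `[a, b]` satisfies `μ ≥ μ + (q - μ) a / b`.
  have hkey : μ + (q - μ) * (a / b) ≤ μ := by
    refine le_csInf hSne ?_
    rintro _ ⟨t, ht, rfl⟩
    have ht0 : 0 < t := ha.trans_le ht.1
    have hg := hE.mass_growth_real x ht.1 μ fun s hs P hP => by
      have h1 := hE.mass_le_card hP
      have hs0 : 0 < s := ha.trans hs.1
      have h2 := hμle s ⟨hs.1.le, hs.2.le.trans ht.2⟩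
      rw [le_div_iff₀ hs0] at h2
      nlinarith
    have h3 : (q - μ) * (a / b) ≤ (q - μ) * (a / t) := by
      have := sub_nonneg.2 hμq
      gcongr
      exact ht.2
    have h4 : μ + (q - μ) * (a / t) = (q * a + μ * (t - a)) / t := by field_simp; ring
    have h5 : (q * a + μ * (t - a)) / t ≤ mass E x t / t := by
      gcongr; rw [← hqa]; exact hg
    simp only
    linarith
  have hqμ : q ≤ μ := by
    have hpos : 0 < a / b := div_pos ha (ha.trans_le hab)
    by_contra hlt
    have := mul_pos (sub_pos.2 (not_le.1 hlt)) hpos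
    linarith
  exact hqμ.trans (hμle b ⟨hab, le_rfl⟩)

end Mass

/-! ### The density bound `H¹(E ∩ B̄(x,r)) ≤ 3r` -/

section Density

variable {n : ℕ} {E : Set (Euc n)}

lemma norm_sq_add_of_unit {v w : Euc n} (hv : ‖v‖ = 1) (hw : ‖w‖ = 1) :
    ‖v + w‖ ^ 2 = 2 + 2 * ⟪v, w⟫_ℝ := by
  rw [norm_add_sq_real, hv, hw]; ring

lemma norm_sub_smul_add_le {v w : Euc n} (hv : ‖v‖ = 1) (hw : ‖w‖ = 1) {l : ℝ} (h0 : 0 ≤ l)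
    (h1 : l ≤ 1) : ‖v - l • (v + w)‖ ≤ 1 - (l - l ^ 2) * ‖v + w‖ ^ 2 / 2 := by
  have hh := norm_sq_add_of_unit hv hw
  have e : ‖v - l • (v + w)‖ ^ 2 = 1 - (l - l ^ 2) * ‖v + w‖ ^ 2 := by
    rw [norm_sub_sq_real, norm_smul, inner_smul_right, inner_add_right, real_inner_self_eq_norm_sq,
      hv, mul_pow, Real.norm_eq_abs, sq_abs, hh]
    ring
  have hle : ‖v + w‖ ≤ 2 := (norm_add_le v w).trans (by rw [hv, hw]; norm_num)
  have hl : l - l ^ 2 ≤ 1 / 4 := by nlinarith [sq_nonneg (l - 1 / 2)]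
  have hl0 : 0 ≤ l - l ^ 2 := by nlinarith
  have hn := norm_nonneg (v + w)
  have h2 : ‖v + w‖ ^ 2 ≤ 4 := by nlinarith
  have hpos : 0 ≤ 1 - (l - l ^ 2) * ‖v + w‖ ^ 2 / 2 := by nlinarith [sq_nonneg ‖v + w‖]
  refine (sq_le_sq₀ (norm_nonneg _) hpos).1 ?_
  rw [e]
  nlinarith [sq_nonneg ((l - l ^ 2) * ‖v + w‖ ^ 2)]

/-- Comparison with the cone over `E ∩ ∂B(x,t)` in which the two spokes in directions `v` and `w`
are merged near the centre, along `v + w`. There is a gain as soon as `‖v + w‖ > 1`, i.e. when the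
angle is less than `120°`. -/
lemma IsMinimalSet.mass_le_pair (hE : IsMinimalSet n 1 E) {x : Euc n} {t : ℝ} (ht : 0 < t)
    {P : Finset (Euc n)} (hP : (P : Set (Euc n)) = E ∩ sphere x t) {v w : Euc n}
    (hv : ‖v‖ = 1) (hw : ‖w‖ = 1) (hvP : x + t • v ∈ P) (hwP : x + t • w ∈ P) (hne : v ≠ w)
    {l : ℝ} (h0 : 0 ≤ l) (h1 : l ≤ 1) :
    mass E x t ≤ t * (P.card - l * ‖v + w‖ * (‖v + w‖ * (1 - l) - 1)) := by
  classical
  set h := ‖v + w‖ with hh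
  set c : Euc n := x + (t * l) • (v + w) with hc
  set p₁ := x + t • v with hp₁
  set p₂ := x + t • w with hp₂
  have hpne : p₁ ≠ p₂ := fun e => hne (smul_right_injective _ ht.ne' (add_left_cancel e))
  set δ : ℝ := t * ((l - l ^ 2) * h ^ 2 / 2) with hδ
  have hspoke : ∀ u u' : Euc n, ‖u‖ = 1 → ‖u'‖ = 1 → ‖u + u'‖ = h → u + u' = v + w →
      dist (x + t • u) c ≤ t - δ := by
    intro u u' hu hu' hn hs
    have e : x + t • u - c = t • (u - l • (u + u')) := by rw [hc, hs]; module
    rw [dist_eq_norm, e, norm_smul, Real.norm_eq_abs, abs_of_pos ht]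
    have := norm_sub_smul_add_le hu hu' h0 h1
    rw [hn] at this
    calc t * ‖u - l • (u + u')‖ ≤ t * (1 - (l - l ^ 2) * h ^ 2 / 2) := by gcongr
      _ = t - δ := by rw [hδ]; ring
  have hd1 : dist p₁ c ≤ t - δ := hspoke v w hv hw rfl rfl
  have hd2 : dist p₂ c ≤ t - δ := hspoke w v hw hv (by rw [add_comm]) (add_comm _ _)
  let m : Euc n → Euc n := fun p => if p = p₁ ∨ p = p₂ then c else x
  have hsum1 : ∑ p ∈ P, dist p (m p) ≤ t * P.card - 2 * δ := by
    have hle : ∀ p ∈ P, dist p (m p) ≤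
        t - ((if p = p₁ then δ else 0) + if p = p₂ then δ else 0) := by
      intro p hp
      have hps : p ∈ E ∩ sphere x t := hP ▸ hp
      by_cases e1 : p = p₁
      · simpa [m, e1, hpne] using hd1
      · by_cases e2 : p = p₂
        · simpa [m, e2, hpne.symm] using hd2
        · simp only [m, e1, e2, or_self, if_false, add_zero, sub_zero]
          exact le_of_eq hps.2
    refine (Finset.sum_le_sum hle).trans (le_of_eq ?_)
    rw [Finset.sum_sub_distrib, Finset.sum_add_distrib, Finset.sum_ite_eq' P p₁,
      Finset.sum_ite_eq' P p₂, if_pos hvP, if_pos hwP, Finset.sum_const, nsmul_eq_mul]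
    ring
  have hsum2 : ∑ q ∈ P.image m, dist q x ≤ t * l * h := by
    have hsub : P.image m ⊆ {c, x} := by
      intro q hq
      obtain ⟨p, -, rfl⟩ := Finset.mem_image.1 hq
      simp only [m]
      split_ifs <;> simp
    refine (Finset.sum_le_sum_of_subset_of_nonneg hsub fun _ _ _ => dist_nonneg).trans ?_
    have hcx : dist c x = t * l * h := by
      rw [hc, dist_self_add_left, norm_smul, Real.norm_eq_abs, abs_of_nonneg (by positivity)]
    by_cases e : c = x
    · simp only [e, Finset.insert_eq_of_mem (Finset.mem_singleton_self x), Finset.sum_singleton,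
        dist_self]
      positivity
    · rw [Finset.sum_pair e, dist_self, hcx, add_zero]
  refine (hE.mass_le_network hP x m).trans ((add_le_add hsum1 hsum2).trans (le_of_eq ?_))
  rw [hδ]; ring

/-- Among four unit vectors, two make an angle at most that of a regular tetrahedron. -/
lemma exists_inner_ge {a b c d : Euc n} (ha : ‖a‖ = 1) (hb : ‖b‖ = 1) (hc : ‖c‖ = 1)
    (hd : ‖d‖ = 1) : -(1 / 3) ≤ ⟪a, b⟫_ℝ ∨ -(1 / 3) ≤ ⟪a, c⟫_ℝ ∨ -(1 / 3) ≤ ⟪a, d⟫_ℝ ∨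
      -(1 / 3) ≤ ⟪b, c⟫_ℝ ∨ -(1 / 3) ≤ ⟪b, d⟫_ℝ ∨ -(1 / 3) ≤ ⟪c, d⟫_ℝ := by
  by_contra hcon
  push Not at hcon
  obtain ⟨h1, h2, h3, h4, h5, h6⟩ := hcon
  have h := sq_nonneg ‖a + b + c + d‖
  rw [norm_add_sq_real, norm_add_sq_real, norm_add_sq_real, inner_add_left, inner_add_left,
    inner_add_left, ha, hb, hc, hd] at h
  linarith

/-- The gain `1/250` over the cone when `E` meets the sphere in at least four points. -/
lemma IsMinimalSet.mass_le_of_four_le (hE : IsMinimalSet n 1 E) {x : Euc n} {t : ℝ} (ht : 0 < t)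
    {P : Finset (Euc n)} (hP : (P : Set (Euc n)) = E ∩ sphere x t) (hcard : 4 ≤ P.card) :
    mass E x t ≤ t * (P.card - 1 / 250) := by
  classical
  have hdir : ∀ p ∈ P, ‖t⁻¹ • (p - x)‖ = 1 ∧ x + t • (t⁻¹ • (p - x)) = p := by
    intro p hp
    have hps : p ∈ E ∩ sphere x t := hP ▸ hp
    have : ‖p - x‖ = t := by rw [← dist_eq_norm]; exact hps.2
    refine ⟨?_, ?_⟩
    · rw [norm_smul, this, norm_inv, Real.norm_eq_abs, abs_of_pos ht, inv_mul_cancel₀ ht.ne']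
    · rw [smul_inv_smul₀ ht.ne']; abel
  have hpair : ∀ p ∈ P, ∀ q ∈ P, p ≠ q → -(1 / 3) ≤ ⟪t⁻¹ • (p - x), t⁻¹ • (q - x)⟫_ℝ →
      mass E x t ≤ t * (P.card - 1 / 250) := by
    intro p hp q hq hpq hin
    have hne : t⁻¹ • (p - x) ≠ t⁻¹ • (q - x) := fun e => hpq (by
      rw [← (hdir p hp).2, e, (hdir q hq).2])
    have h := hE.mass_le_pair ht hP (hdir p hp).1 (hdir q hq).1 (by rwa [(hdir p hp).2])
      (by rwa [(hdir q hq).2]) hne (l := 1 / 10) (by norm_num) (by norm_num)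
    have hs := norm_sq_add_of_unit (hdir p hp).1 (hdir q hq).1
    set k := ‖t⁻¹ • (p - x) + t⁻¹ • (q - x)‖
    have hk0 : 0 ≤ k := norm_nonneg _
    have hk : 115 / 100 ≤ k := by
      by_contra hlt
      push Not at hlt
      nlinarith
    refine h.trans ?_
    gcongr
    nlinarith
  obtain ⟨a, ha, b, hb, c, hc, hab, hac, hbc⟩ := Finset.two_lt_card.1 (by omega : 2 < P.card)
  obtain ⟨d, hd, hdn⟩ := Finset.exists_mem_notMem_of_card_lt_card (s := {a, b, c}) (t := P)
    (lt_of_le_of_lt Finset.card_le_three (by omega))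
  simp only [Finset.mem_insert, Finset.mem_singleton, not_or] at hdn
  obtain ⟨hda, hdb, hdc⟩ := hdn
  rcases exists_inner_ge (hdir a ha).1 (hdir b hb).1 (hdir c hc).1 (hdir d hd).1 with
    h | h | h | h | h | h
  · exact hpair a ha b hb hab h
  · exact hpair a ha c hc hac h
  · exact hpair a ha d hd (Ne.symm hda) h
  · exact hpair b hb c hc hbc h
  · exact hpair b hb d hd (Ne.symm hdb) h
  · exact hpair c hc d hd (Ne.symm hdc) h

/-- Above density `3`, the density gains a fixed amount at each doubling of the radius. -/
lemma IsMinimalSet.density_doubling (hE : IsMinimalSet n 1 E) (x : Euc n) {a : ℝ} (ha : 0 < a)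
    (h3 : 3 < mass E x a / a) : mass E x a / a + 1 / 500 ≤ mass E x (2 * a) / (2 * a) := by
  have hg := hE.mass_growth_real x (by linarith : a ≤ 2 * a) (mass E x a / a + 1 / 250)
    fun t ht P hP => by
      have ht0 : 0 < t := ha.trans ht.1
      have hm := hE.monotonicity x ha ht.1.le
      rw [le_div_iff₀ ht0] at hm
      have hc := hE.mass_le_card hP
      have h4 : 4 ≤ P.card := by
        have : (3 : ℝ) < P.card := by
          by_contra hle
          push Not at hle
          nlinarith
        exact_mod_cast this
      have h5 := hE.mass_le_of_four_le ht0 hP h4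
      by_contra hlt
      push Not at hlt
      nlinarith
  rw [le_div_iff₀ (by positivity)]
  have e : mass E x a = mass E x a / a * a := by field_simp
  nlinarith

/-- Comparison with a broom: each point of the sphere is joined to a nearby point of a grid of mesh
`t / N`, and the grid points are joined to the centre. -/
lemma IsMinimalSet.mass_le_broom (hE : IsMinimalSet n 1 E) {x : Euc n} {t : ℝ} (ht : 0 < t)
    {P : Finset (Euc n)} (hP : (P : Set (Euc n)) = E ∩ sphere x t) {N : ℕ} (hN : 1 ≤ N) :
    mass E x t ≤ t * (P.card * ((n + 1) / N) + (n + 2) * (3 * N) ^ (n + 1)) := by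
  classical
  have hN0 : (0 : ℝ) < N := by exact_mod_cast hN
  have hN1 : (1 : ℝ) ≤ N := by exact_mod_cast hN
  let grid : (Fin n → ℤ) → Euc n := fun z => x + t • WithLp.toLp 2 (fun i => (z i : ℝ) / N)
  let zz : Euc n → Fin n → ℤ := fun p i => ⌊N * (t⁻¹ • (p - x)) i⌋
  let m : Euc n → Euc n := fun p => grid (zz p)
  have hdist : ∀ p, dist p (m p) ≤ t * ((n + 1) / N) := by
    intro p
    set u := t⁻¹ • (p - x) with hu
    have e : p - m p = t • (u - WithLp.toLp 2 (fun i => (zz p i : ℝ) / N)) := by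
      simp only [m, grid, hu, smul_sub, smul_inv_smul₀ ht.ne']; abel
    rw [dist_eq_norm, e, norm_smul, Real.norm_eq_abs, abs_of_pos ht]
    gcongr
    refine (sq_le_sq₀ (norm_nonneg _) (by positivity)).1 ?_
    rw [EuclideanSpace.norm_sq_eq]
    have hcoord : ∀ i, ‖(u - WithLp.toLp 2 (fun i => (zz p i : ℝ) / N)) i‖ ^ 2 ≤ (1 / N) ^ 2 := by
      intro i
      have h1 := Int.floor_le (N * u i)
      have h2 := Int.lt_floor_add_one (N * u i)
      have e2 : (u - WithLp.toLp 2 (fun i => (zz p i : ℝ) / N)) i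
          = (N * u i - ⌊N * u i⌋) / N := by
        simp only [PiLp.sub_apply, zz, ← hu]; field_simp
      rw [e2, Real.norm_eq_abs, abs_of_nonneg (div_nonneg (by linarith) hN0.le)]
      have h3 : N * u i - ⌊N * u i⌋ ≤ 1 := by linarith
      have h4 : 0 ≤ N * u i - ⌊N * u i⌋ := by linarith
      gcongr
    refine (Finset.sum_le_sum fun i _ => hcoord i).trans ?_
    rw [Finset.sum_const, Finset.card_univ, Fintype.card_fin, nsmul_eq_mul, div_pow, div_pow,
      one_pow, mul_one_div]
    gcongr
    nlinarith [(Nat.cast_nonneg n : (0 : ℝ) ≤ n)]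
  have hsum1 : ∑ p ∈ P, dist p (m p) ≤ P.card * (t * ((n + 1) / N)) := by
    refine (Finset.sum_le_card_nsmul P _ _ fun p _ => hdist p).trans (by rw [nsmul_eq_mul])
  have hcard : (P.image m).card ≤ (2 * N + 1) ^ n := by
    have hsub : P.image m ⊆
        (Fintype.piFinset fun _ : Fin n => Finset.Icc (-(N : ℤ)) N).image grid := by
      intro q hq
      obtain ⟨p, hp, rfl⟩ := Finset.mem_image.1 hq
      refine Finset.mem_image_of_mem grid (Fintype.mem_piFinset.2 fun i => ?_)
      have hps : p ∈ E ∩ sphere x t := hP ▸ hp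
      have hpx : ‖p - x‖ = t := by rw [← dist_eq_norm]; exact hps.2
      have h1 : |(t⁻¹ • (p - x)) i| ≤ 1 := by
        refine (PiLp.norm_apply_le (t⁻¹ • (p - x)) i).trans ?_
        rw [norm_smul, hpx, norm_inv, Real.norm_eq_abs, abs_of_pos ht, inv_mul_cancel₀ ht.ne']
      rw [abs_le] at h1
      rw [Finset.mem_Icc]
      constructor
      · refine Int.le_floor.2 ?_
        push_cast
        nlinarith
      · have : (⌊N * (t⁻¹ • (p - x)) i⌋ : ℝ) ≤ N := (Int.floor_le _).trans (by nlinarith)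
        exact_mod_cast this
    refine (Finset.card_le_card hsub).trans (Finset.card_image_le.trans ?_)
    rw [Fintype.card_piFinset]
    simp only [Int.card_Icc, Finset.prod_const, Finset.card_univ, Fintype.card_fin]
    refine Nat.pow_le_pow_left ?_ n
    omega
  have hsum2 : ∑ q ∈ P.image m, dist q x ≤ (P.image m).card * (t * (n + 2)) := by
    refine (Finset.sum_le_card_nsmul _ _ (t * (n + 2)) fun q hq => ?_).trans (by rw [nsmul_eq_mul])
    obtain ⟨p, hp, rfl⟩ := Finset.mem_image.1 hq
    have hps : p ∈ E ∩ sphere x t := hP ▸ hp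
    have hpx : dist p x = t := hps.2
    have h1 := dist_triangle_left (m p) x p
    have h2 := hdist p
    have h3 : ((n : ℝ) + 1) / N ≤ n + 1 := div_le_self (by positivity) hN1
    nlinarith
  have hcard' : ((P.image m).card : ℝ) ≤ (3 * N) ^ (n + 1) := by
    have h1 : ((P.image m).card : ℝ) ≤ (2 * N + 1) ^ n := by exact_mod_cast hcard
    refine h1.trans ?_
    calc (2 * (N : ℝ) + 1) ^ n ≤ (3 * N) ^ n := by gcongr; linarith
      _ ≤ (3 * N) ^ (n + 1) := pow_le_pow_right₀ (by linarith) (Nat.le_succ n)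
  refine (hE.mass_le_network hP x m).trans ((add_le_add hsum1 hsum2).trans ?_)
  have : ((P.image m).card : ℝ) * (t * (n + 2)) ≤ (3 * N) ^ (n + 1) * (t * (n + 2)) := by gcongr
  linarith

/-- The density of `E` is bounded: a large density would force, through the broom comparison, a
growth of the length that blows up at a finite radius. -/
lemma IsMinimalSet.density_bounded (hE : IsMinimalSet n 1 E) (x : Euc n) :
    ∃ A : ℝ, ∀ r : ℝ, 0 < r → mass E x r / r < A := by
  -- The grid sizes `M j` and the density thresholds `A j`.
  let M : ℕ → ℕ := fun j => 8 * (n + 1) * 4 ^ (n + 1) * 4 ^ j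
  let A : ℕ → ℝ := fun j => 2 * ((n + 2) * (3 * (M j : ℝ)) ^ (n + 1))
  refine ⟨A 0, fun r hr => ?_⟩
  by_contra hcon
  push Not at hcon
  have hM1 : ∀ j, 1 ≤ M j := fun j => Nat.succ_le_of_lt (by positivity)
  have hApos : ∀ j, 0 < A j := fun j => by
    have : (0 : ℝ) < M j := by exact_mod_cast hM1 j
    positivity
  have hAsucc : ∀ j, A (j + 1) = 4 ^ (n + 1) * A j := by
    intro j
    have : (M (j + 1) : ℝ) = 4 * M j := by simp only [M]; push_cast; ring
    simp only [A, this]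
    rw [show 3 * (4 * (M j : ℝ)) = 4 * (3 * M j) by ring, mul_pow]
    ring
  let a : ℕ → ℝ := fun j => r * (2 - (1 / 2) ^ j)
  have hhalf : ∀ j : ℕ, (1 / 2 : ℝ) ^ j ≤ 1 := fun j => pow_le_one₀ (by norm_num) (by norm_num)
  have hhalf0 : ∀ j : ℕ, (0 : ℝ) < (1 / 2 : ℝ) ^ j := fun j => by positivity
  have har : ∀ j, r ≤ a j := fun j => by
    simp only [a]; nlinarith [hhalf j]
  have ha2 : ∀ j, a j ≤ 2 * r := fun j => by
    simp only [a]; nlinarith [hhalf0 j]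
  have hind : ∀ j, A j ≤ mass E x (a j) / a j := by
    intro j
    induction j with
    | zero => simpa [a, show (2 : ℝ) - 1 = 1 by norm_num] using hcon
    | succ j ih =>
      have ha0 : 0 < a j := hr.trans_le (har j)
      have hstep : a (j + 1) - a j = r * (1 / 2) ^ j / 2 := by simp only [a]; ring
      have hM0 : (0 : ℝ) < M j := by exact_mod_cast hM1 j
      have hg := hE.mass_growth_real x (a := a j) (b := a (j + 1))
        (by have : 0 < r * (1 / 2 : ℝ) ^ j / 2 := by positivity
            linarith) (A j / 2 * (M j / (n + 1))) fun t ht P hP => by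
          have ht0 : 0 < t := ha0.trans ht.1
          have h1 := ih.trans (hE.monotonicity x ha0 ht.1.le)
          rw [le_div_iff₀ ht0] at h1
          have h2 := h1.trans (hE.mass_le_broom ht0 hP (hM1 j))
          rw [mul_comm (A j) t] at h2
          have h3 := le_of_mul_le_mul_left h2 ht0
          have h4 : A j / 2 ≤ P.card * ((n + 1) / M j) := by
            have : A j / 2 = (n + 2) * (3 * (M j : ℝ)) ^ (n + 1) := by simp only [A]; ring
            linarith
          calc A j / 2 * (M j / (n + 1)) ≤ P.card * ((n + 1) / M j) * (M j / (n + 1)) := by gcongr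
            _ = P.card := by field_simp
      rw [le_div_iff₀ (hr.trans_le (har _)), hAsucc]
      have hMj : (M j : ℝ) / (n + 1) = 8 * 4 ^ (n + 1) * 4 ^ j := by
        simp only [M]; push_cast; field_simp
      rw [hstep, hMj] at hg
      have h5 : (1 : ℝ) ≤ 4 ^ j * (1 / 2) ^ j := by
        rw [← mul_pow]; exact one_le_pow₀ (by norm_num)
      have h6 := mass_nonneg (E := E) x (a j)
      have h7 : 0 < (4 : ℝ) ^ (n + 1) * A j := mul_pos (by positivity) (hApos j)
      calc 4 ^ (n + 1) * A j * a (j + 1) ≤ 4 ^ (n + 1) * A j * (2 * r) := by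
            gcongr; exact ha2 _
        _ ≤ 4 ^ (n + 1) * A j * (2 * r) * (4 ^ j * (1 / 2) ^ j) :=
            le_mul_of_one_le_right (by positivity) h5
        _ = A j / 2 * (8 * 4 ^ (n + 1) * 4 ^ j) * (r * (1 / 2) ^ j / 2) := by ring
        _ ≤ _ := by linarith
  obtain ⟨j, hj⟩ := pow_unbounded_of_one_lt (mass E x (2 * r) / r) (by norm_num : (1 : ℝ) < 4)
  have h1 := hind j
  rw [le_div_iff₀ (hr.trans_le (har j))] at h1
  have h2 : (4 : ℝ) ^ j ≤ A j := by
    have hM4 : (4 : ℝ) ^ j ≤ M j := by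
      have : 4 ^ j ≤ M j := Nat.le_mul_of_pos_left _ (by positivity)
      exact_mod_cast this
    have hM0 : (1 : ℝ) ≤ M j := by exact_mod_cast hM1 j
    have h3 : 3 * (M j : ℝ) ≤ (3 * M j) ^ (n + 1) := le_self_pow₀ (by linarith) (by omega)
    have h4 : (M j : ℝ) ≤ (n + 2) * (3 * (M j : ℝ)) ^ (n + 1) := by
      have : (0 : ℝ) ≤ n := Nat.cast_nonneg n
      nlinarith
    simp only [A]
    linarith
  have h3 : mass E x (a j) ≤ mass E x (2 * r) := hE.mass_mono x (ha2 j)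
  rw [div_lt_iff₀ hr] at hj
  have h4 : (4 : ℝ) ^ j * r ≤ A j * a j := mul_le_mul h2 (har j) hr.le (hApos j).le
  linarith

lemma IsMinimalSet.mass_le_three (hE : IsMinimalSet n 1 E) (x : Euc n) {r : ℝ} (hr : 0 < r) :
    mass E x r ≤ 3 * r := by
  by_contra hcon
  push Not at hcon
  obtain ⟨A, hA⟩ := hE.density_bounded x
  have h3 : 3 < mass E x r / r := (lt_div_iff₀ hr).2 hcon
  have hind : ∀ j : ℕ, 3 + j * (1 / 500) < mass E x (2 ^ j * r) / (2 ^ j * r) := by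
    intro j
    induction j with
    | zero => simpa using h3
    | succ j ih =>
      have h0 : 0 < 2 ^ j * r := by positivity
      have h1 : 3 < mass E x (2 ^ j * r) / (2 ^ j * r) := by
        have : (0 : ℝ) ≤ j * (1 / 500) := by positivity
        linarith
      have h2 := hE.density_doubling x h0 h1
      rw [show (2 : ℝ) ^ (j + 1) * r = 2 * (2 ^ j * r) by ring]
      push_cast
      linarith
  obtain ⟨j, hj⟩ := exists_nat_gt (500 * A)
  have h1 := hind j
  have h2 := hA (2 ^ j * r) (by positivity)
  linarith

end Density

/-! ### Points of density two -/

section DensityTwo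

variable {n : ℕ} {E : Set (Euc n)}

lemma IsReducedSet.measure_pos (hred : IsReducedSet n 1 E) {x : Euc n} (hx : x ∈ E) {r : ℝ}
    (hr : 0 < r) : 0 < μH[1] (E ∩ ball x r) := by
  have h := hred x hx r hr
  rwa [Nat.cast_one] at h

lemma IsMinimalSet.mass_pos (hE : IsMinimalSet n 1 E) (hred : IsReducedSet n 1 E) {x : Euc n}
    (hx : x ∈ E) {r : ℝ} (hr : 0 < r) : 0 < mass E x r :=
  ENNReal.toReal_pos ((hred.measure_pos hx hr).trans_le
    (measure_mono (inter_subset_inter_right _ ball_subset_closedBall))).ne' (hE.ball_ne_top x r)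

/-- A compact piece of `E` attached to the rest of `E` at one point only is negligible. -/
lemma IsMinimalSet.measure_eq_zero_of_one_point (hE : IsMinimalSet n 1 E) {K : Set (Euc n)}
    (hKE : K ⊆ E) (hK : IsCompact K) {p : Euc n} (hp : p ∈ K)
    (hcl : closure (E \ K) ∩ K ⊆ {p}) : μH[1] K = 0 := by
  have h := hE.le_network hKE hK {p} (by simpa using hp) (by simpa using hcl) p id
  simpa using h

/-- A compact piece of `E` attached to the rest of `E` at two points only has at most the length of
the segment between them. -/
lemma IsMinimalSet.measure_le_dist (hE : IsMinimalSet n 1 E) {K : Set (Euc n)}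
    (hKE : K ⊆ E) (hK : IsCompact K) {p q : Euc n} (hp : p ∈ K) (hq : q ∈ K)
    (hcl : closure (E \ K) ∩ K ⊆ {p, q}) : μH[1] K ≤ ENNReal.ofReal (dist p q) := by
  classical
  by_cases hpq : p = q
  · subst hpq
    rw [hE.measure_eq_zero_of_one_point hKE hK hp (by simpa using hcl)]
    exact bot_le
  · have h := hE.le_network hKE hK {p, q}
      (by simpa [insert_subset_iff] using And.intro hp hq) (by simpa using hcl) q (fun _ => q)
    refine h.trans (ENNReal.ofReal_le_ofReal ?_)
    rw [Finset.sum_pair hpq]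
    have : ∑ q' ∈ Finset.image (fun _ => q) {p, q}, dist q' q = 0 := by
      refine Finset.sum_eq_zero fun q' hq' => ?_
      obtain ⟨_, -, rfl⟩ := Finset.mem_image.1 hq'
      exact dist_self _
    rw [this, dist_self]
    simp

lemma closure_diff_subset_union {K A B : Set (Euc n)} (hK : K ⊆ A ∪ B) (hB : IsClosed B) :
    closure (E \ A) ⊆ closure (E \ K) ∪ B := by
  have h : E \ A ⊆ (E \ K) ∪ B := by
    rintro y ⟨hyE, hyA⟩
    by_cases hyK : y ∈ K
    · exact Or.inr ((hK hyK).resolve_left hyA)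
    · exact Or.inl ⟨hyE, hyK⟩
  refine (closure_mono h).trans ?_
  rw [closure_union, hB.closure_eq]

/-- A non-negligible piece of `E` attached to the rest of `E` at the points `p`, `q` only cannot
be cut between `p` and `q`. -/
lemma IsMinimalSet.exists_mem_slice (hE : IsMinimalSet n 1 E) {K : Set (Euc n)}
    (hKE : K ⊆ E) (hK : IsCompact K) {p q : Euc n} (hp : p ∈ K) (hq : q ∈ K)
    (hcl : closure (E \ K) ∩ K ⊆ {p, q}) (hpos : 0 < μH[1] K) {t : ℝ}
    (ht : t ∈ Ioo 0 (dist p q)) : ∃ y ∈ K, dist y p = t := by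
  by_contra hno
  push Not at hno
  have hA : IsClosed {y : Euc n | dist y p ≤ t} :=
    isClosed_le (continuous_id.dist continuous_const) continuous_const
  have hB : IsClosed {y : Euc n | t ≤ dist y p} :=
    isClosed_le continuous_const (continuous_id.dist continuous_const)
  have hAB : K ⊆ (K ∩ {y : Euc n | dist y p ≤ t}) ∪ (K ∩ {y : Euc n | t ≤ dist y p}) := by
    intro y hy
    rcases le_total (dist y p) t with h | h
    · exact Or.inl ⟨hy, h⟩
    · exact Or.inr ⟨hy, h⟩
  have h1 : μH[1] (K ∩ {y : Euc n | dist y p ≤ t}) = 0 := by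
    refine hE.measure_eq_zero_of_one_point (p := p) (inter_subset_left.trans hKE)
      (hK.inter_right hA) ⟨hp, by simpa using ht.1.le⟩ ?_
    rintro y ⟨hy, hyK, hyt⟩
    have hyt : dist y p ≤ t := hyt
    rcases closure_diff_subset_union hAB (hK.isClosed.inter hB) hy with h | h
    · rcases hcl ⟨h, hyK⟩ with h | h
      · exact h
      · rw [mem_singleton_iff] at h
        rw [h, dist_comm] at hyt
        exact absurd ht.2 (not_lt.2 hyt)
    · exact absurd (le_antisymm hyt h.2) (hno y hyK)
  have h2 : μH[1] (K ∩ {y : Euc n | t ≤ dist y p}) = 0 := by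
    refine hE.measure_eq_zero_of_one_point (p := q) (inter_subset_left.trans hKE)
      (hK.inter_right hB) ⟨hq, by
        show t ≤ dist q p
        rw [dist_comm]; exact ht.2.le⟩ ?_
    rintro y ⟨hy, hyK, hyt⟩
    have hyt : t ≤ dist y p := hyt
    rcases closure_diff_subset_union (hAB.trans (union_comm _ _).subset)
      (hK.isClosed.inter hA) hy with h | h
    · rcases hcl ⟨h, hyK⟩ with h | h
      · rw [h, dist_self] at hyt
        exact absurd ht.1 (not_lt.2 hyt)
      · exact h
    · exact absurd (le_antisymm h.2 hyt) (hno y hyK)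
  have := (measure_mono hAB).trans (measure_union_le (μ := μH[1]) _ _)
  rw [h1, h2, add_zero] at this
  exact absurd hpos (not_lt.2 this)

lemma le_measure_of_slices (S : Set (Euc n)) (p : Euc n) {a b : ℝ}
    (h : ∀ᵐ t : ℝ, t ∈ Ioo a b → ∃ y ∈ S, dist y p = t) : ENNReal.ofReal (b - a) ≤ μH[1] S := by
  have := le_hausdorffMeasure_of_slices S (fun y => dist y p) (lipschitz_dist_to p) 1 (Ioo a b)
    (by
      filter_upwards [h] with t ht hI
      obtain ⟨y, hy, hyt⟩ := ht hI
      exact ⟨{y}, by simpa using ⟨hy, hyt⟩, by simp⟩) measurableSet_Ioo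
  simpa using this

/-- Let a non-negligible piece `K` of `E` be attached to the rest of `E` at `p` and `q` only. For
almost every `t`, the slice of `K` at distance `t` from `p` is a single point `y`, and cutting `K`
there gives `|p - y| + |y - q| ≤ |p - q|`, so that `y` lies on the segment. -/
lemma IsMinimalSet.ae_slice_segment (hE : IsMinimalSet n 1 E) {K : Set (Euc n)}
    (hKE : K ⊆ E) (hK : IsCompact K) {p q : Euc n} (hp : p ∈ K) (hq : q ∈ K)
    (hcl : closure (E \ K) ∩ K ⊆ {p, q}) (hpos : 0 < μH[1] K) :
    ∀ᵐ t : ℝ, t ∈ Ioo 0 (dist p q) → ∃ y ∈ K, dist y p = t ∧ y ∈ segment ℝ p q := by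
  set ℓ := dist p q with hℓ
  have hle := hE.measure_le_dist hKE hK hp hq hcl
  have hslice := fun t ht => hE.exists_mem_slice hKE hK hp hq hcl hpos (t := t) ht
  obtain ⟨G, hG, hGF, hGi⟩ := exists_slice_majorant K (fun y => dist y p) (lipschitz_dist_to p)
  have hG1 : (fun _ => (1 : ℝ≥0∞)) =ᵐ[volume.restrict (Ioo 0 ℓ)] G := by
    refine ae_eq_of_ae_le_of_lintegral_le ?_ (by simp) hG.aemeasurable ?_
    · refine (ae_restrict_iff' measurableSet_Ioo).2 (Eventually.of_forall fun t ht => ?_)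
      obtain ⟨y, hy, hyt⟩ := hslice t ht
      have := hGF t {y} (by simpa using ⟨hy, hyt⟩)
      simpa using this
    · refine (setLIntegral_le_lintegral _ _).trans (hGi.trans (hle.trans ?_))
      simp [hℓ]
  have hG1 := (ae_restrict_iff' measurableSet_Ioo).1 hG1
  filter_upwards [hG1] with t htG ht
  have htG := htG ht
  obtain ⟨y, hy, hyt⟩ := hslice t ht
  refine ⟨y, hy, hyt, ?_⟩
  -- The slice through `y` is the single point `y`.
  have huniq : ∀ z ∈ K, dist z p = t → z = y := by
    intro z hz hzt
    by_contra hzy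
    classical
    have h2 := hGF t {z, y} (by
      intro w hw
      rcases Finset.mem_insert.1 (Finset.mem_coe.1 hw) with rfl | hw
      · exact ⟨hz, hzt⟩
      · rw [Finset.mem_singleton.1 hw]; exact ⟨hy, hyt⟩)
    rw [← htG, Finset.card_pair hzy] at h2
    norm_num at h2
  have hB : IsClosed {y : Euc n | t ≤ dist y p} :=
    isClosed_le continuous_const (continuous_id.dist continuous_const)
  have hA : IsClosed {y : Euc n | dist y p ≤ t} :=
    isClosed_le (continuous_id.dist continuous_const) continuous_const
  set K₂ := K ∩ {y : Euc n | t ≤ dist y p} with hK₂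
  have hcl₂ : closure (E \ K₂) ∩ K₂ ⊆ {y, q} := by
    have hAB : K ⊆ K₂ ∪ (K ∩ {y : Euc n | dist y p ≤ t}) := by
      intro z hz
      rcases le_total (dist z p) t with h | h
      · exact Or.inr ⟨hz, h⟩
      · exact Or.inl ⟨hz, h⟩
    rintro z ⟨hz, hzK, hzt⟩
    have hzt : t ≤ dist z p := hzt
    rcases closure_diff_subset_union hAB (hK.isClosed.inter hA) hz with h | h
    · rcases hcl ⟨h, hzK⟩ with h | h
      · rw [h, dist_self] at hzt
        exact absurd ht.1 (not_lt.2 hzt)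
      · exact Or.inr h
    · exact Or.inl (huniq z hzK (le_antisymm h.2 hzt))
  have hle₂ : ENNReal.ofReal (ℓ - t) ≤ μH[1] K₂ := by
    refine le_measure_of_slices K₂ p (Eventually.of_forall fun s hs => ?_)
    obtain ⟨z, hz, hzs⟩ := hslice s ⟨ht.1.trans hs.1, hs.2⟩
    exact ⟨z, ⟨hz, by rw [mem_ofPred_eq, hzs]; exact hs.1.le⟩, hzs⟩
  have hpos₂ : 0 < μH[1] K₂ :=
    (ENNReal.ofReal_pos.2 (sub_pos.2 ht.2)).trans_le hle₂
  have hyq : ENNReal.ofReal (dist y q) ≤ μH[1] K₂ := by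
    have := le_measure_of_slices (a := 0) (b := dist y q) K₂ y (Eventually.of_forall fun s hs =>
      hE.exists_mem_slice (inter_subset_left.trans hKE) (hK.inter_right hB) ⟨hy, hyt.ge⟩
        ⟨hq, by rw [mem_ofPred_eq, dist_comm]; exact ht.2.le⟩ hcl₂ hpos₂ hs)
    simpa using this
  have hle₁ : ENNReal.ofReal t ≤ μH[1] (K \ {y : Euc n | t ≤ dist y p}) := by
    have := le_measure_of_slices (a := 0) (b := t) (K \ {y : Euc n | t ≤ dist y p}) p
      (Eventually.of_forall fun s hs => by
        obtain ⟨z, hz, hzs⟩ := hslice s ⟨hs.1, hs.2.trans ht.2⟩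
        exact ⟨z, ⟨hz, by rw [mem_ofPred_eq, hzs]; exact not_le.2 hs.2⟩, hzs⟩)
    simpa using this
  have hsum := measure_inter_add_sdiff (μ := μH[1]) K hB.measurableSet
  have hfin : ENNReal.ofReal (dist y q) + ENNReal.ofReal t ≤ ENNReal.ofReal ℓ :=
    (add_le_add hyq hle₁).trans (hsum.le.trans hle)
  rw [← ENNReal.ofReal_add dist_nonneg ht.1.le, ENNReal.ofReal_le_ofReal_iff dist_nonneg] at hfin
  rw [mem_segment_iff_wbtw, ← dist_add_dist_eq_iff]
  refine le_antisymm ?_ (dist_triangle _ _ _)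
  rw [dist_comm p y, hyt]
  linarith

lemma eq_of_mem_segment_of_dist_eq {p q y z : Euc n} (hy : y ∈ segment ℝ p q)
    (hz : z ∈ segment ℝ p q) (h : dist y p = dist z p) : y = z := by
  rw [segment_eq_image'] at hy hz
  obtain ⟨a, ha, rfl⟩ := hy
  obtain ⟨b, hb, rfl⟩ := hz
  simp only [dist_eq_norm, add_sub_cancel_left, norm_smul, Real.norm_eq_abs, abs_of_nonneg ha.1,
    abs_of_nonneg hb.1] at h
  rcases mul_eq_mul_right_iff.1 h with rfl | h
  · rfl
  · rw [norm_eq_zero.1 h]; simp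

lemma isClosed_segment (p q : Euc n) : IsClosed (segment ℝ p q) := by
  rw [segment_eq_image']
  exact (isCompact_Icc.image (by fun_prop)).isClosed

/-- A point of `K` off the segment would carry positive length, in addition to the length
`|p - q|` that is already needed on the segment. -/
lemma IsMinimalSet.subset_segment (hE : IsMinimalSet n 1 E) (hred : IsReducedSet n 1 E)
    {K : Set (Euc n)} (hKE : K ⊆ E) (hK : IsCompact K) {p q : Euc n} (hp : p ∈ K) (hq : q ∈ K)
    (hcl : closure (E \ K) ∩ K ⊆ {p, q}) (hpos : 0 < μH[1] K) : K ⊆ segment ℝ p q := by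
  have hle := hE.measure_le_dist hKE hK hp hq hcl
  have hae := hE.ae_slice_segment hKE hK hp hq hcl hpos
  intro z hzK
  by_contra hz
  have hzcl : z ∉ closure (E \ K) := by
    intro h
    rcases hcl ⟨h, hzK⟩ with h | h
    · rw [h] at hz; exact hz (left_mem_segment ℝ p q)
    · rw [mem_singleton_iff.1 h] at hz; exact hz (right_mem_segment ℝ p q)
  obtain ⟨ε, hε, hball⟩ := Metric.isOpen_iff.1
    (isClosed_closure.union (isClosed_segment p q)).isOpen_compl z
    (show z ∈ (closure (E \ K) ∪ segment ℝ p q)ᶜ from fun h => h.elim hzcl hz)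
  have h1 : ENNReal.ofReal (dist p q) ≤ μH[1] (K \ ball z ε) := by
    have := le_measure_of_slices (a := 0) (b := dist p q) (K \ ball z ε) p (by
      filter_upwards [hae] with t ht hI
      obtain ⟨y, hy, hyt, hys⟩ := ht hI
      exact ⟨y, ⟨hy, fun hb => hball hb (Or.inr hys)⟩, hyt⟩)
    rwa [sub_zero] at this
  have h2 : 0 < μH[1] (K ∩ ball z ε) := by
    refine (hred.measure_pos (hKE hzK) hε).trans_le (measure_mono ?_)
    rintro y ⟨hyE, hyb⟩
    refine ⟨?_, hyb⟩
    by_contra hyK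
    exact hball hyb (Or.inl (subset_closure ⟨hyE, hyK⟩))
  have hsum := measure_inter_add_sdiff (μ := μH[1]) K (measurableSet_ball (x := z) (ε := ε))
  have h3 : μH[1] (K ∩ ball z ε) + ENNReal.ofReal (dist p q) ≤ ENNReal.ofReal (dist p q) :=
    (add_le_add le_rfl h1).trans (hsum.le.trans hle)
  rw [add_comm] at h3
  exact absurd (ENNReal.lt_add_right ENNReal.ofReal_ne_top h2.ne') (not_lt.2 h3)

/-- A non-negligible compact piece of `E` attached to the rest of `E` at two points only is a
segment. -/
lemma IsMinimalSet.eq_segment (hE : IsMinimalSet n 1 E) (hred : IsReducedSet n 1 E)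
    {K : Set (Euc n)} (hKE : K ⊆ E) (hK : IsCompact K) {p q : Euc n} (hp : p ∈ K) (hq : q ∈ K)
    (hcl : closure (E \ K) ∩ K ⊆ {p, q}) (hpos : 0 < μH[1] K) : K = segment ℝ p q := by
  have hsub := hE.subset_segment hred hKE hK hp hq hcl hpos
  refine hsub.antisymm fun z hz => ?_
  by_cases hzp : z = p
  · exact hzp ▸ hp
  by_cases hzq : z = q
  · exact hzq ▸ hq
  have hd : dist p z + dist z q = dist p q :=
    dist_add_dist_eq_iff.2 (mem_segment_iff_wbtw.1 hz)
  have h1 : 0 < dist z p := dist_pos.2 hzp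
  have h2 : 0 < dist z q := dist_pos.2 hzq
  have h3 : dist z p < dist p q := by rw [dist_comm p z] at hd; linarith
  obtain ⟨y, hy, hyt⟩ := hE.exists_mem_slice hKE hK hp hq hcl hpos ⟨h1, h3⟩
  have h4 : y = z := eq_of_mem_segment_of_dist_eq (hsub hy) hz hyt
  exact h4 ▸ hy

lemma isCompact_ball_piece (hE : IsMinimalSet n 1 E) (x : Euc n) (t : ℝ) :
    IsCompact (E ∩ closedBall x t) := (isCompact_closedBall x t).inter_left hE.1

lemma closure_diff_ball_subset (x : Euc n) (t : ℝ) :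
    closure (E \ (E ∩ closedBall x t)) ∩ (E ∩ closedBall x t) ⊆ E ∩ sphere x t := by
  rintro y ⟨hy, hyE, hyt⟩
  refine ⟨hyE, le_antisymm hyt ?_⟩
  have h1 : closure (E \ (E ∩ closedBall x t)) ⊆ {y | t ≤ dist y x} := by
    refine closure_minimal ?_ (isClosed_le continuous_const (continuous_id.dist continuous_const))
    rintro z ⟨hzE, hz⟩
    rw [mem_ofPred_eq]
    by_contra hlt
    exact hz ⟨hzE, mem_closedBall.2 (not_le.1 hlt).le⟩
  exact h1 hy

lemma IsMinimalSet.two_le_card (hE : IsMinimalSet n 1 E) (hred : IsReducedSet n 1 E) {x : Euc n}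
    (hx : x ∈ E) {t : ℝ} (ht : 0 < t) {P : Finset (Euc n)}
    (hP : (P : Set (Euc n)) = E ∩ sphere x t) : 2 ≤ P.card := by
  by_contra hlt
  have hpos := hE.mass_pos hred hx ht
  rcases P.eq_empty_or_nonempty with rfl | hne
  · have := hE.mass_le_card hP
    simp at this
    linarith
  · obtain ⟨p, rfl⟩ := Finset.card_eq_one.1 (by have := hne.card_pos; omega : P.card = 1)
    have := hE.mass_le_network hP p id
    simp at this
    linarith

lemma IsMinimalSet.two_mul_le_mass (hE : IsMinimalSet n 1 E) (hred : IsReducedSet n 1 E)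
    {x : Euc n} (hx : x ∈ E) {r : ℝ} (hr : 0 ≤ r) : 2 * r ≤ mass E x r := by
  have := hE.mass_growth x hr 2 fun t ht P hP => hE.two_le_card hred hx ht.1 hP
  have h0 := mass_nonneg (E := E) x 0
  push_cast at this
  linarith

/-- `x` is a regular point of `E`, with direction `v` at scale `r`: in the closed ball `B̄(x,r)`,
the set `E` is the diameter in the unit direction `v`. -/
def RegularAt (E : Set (Euc n)) (x v : Euc n) (r : ℝ) : Prop :=
  0 < r ∧ ‖v‖ = 1 ∧ E ∩ closedBall x r = {y | ∃ s : ℝ, |s| ≤ r ∧ y = x + s • v}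

/-- `x` is a triple point of `E`: the density of `E` at `x` is `3` at all scales. -/
def TripleAt (E : Set (Euc n)) (x : Euc n) : Prop :=
  ∀ r : ℝ, 0 < r → mass E x r = 3 * r

lemma IsMinimalSet.mass_le_of_card_two (hE : IsMinimalSet n 1 E) {x : Euc n} {t : ℝ}
    {p q : Euc n} (hP : ({p, q} : Set (Euc n)) = E ∩ sphere x t) :
    mass E x t ≤ dist p q := by
  have hp : p ∈ E ∩ sphere x t := hP ▸ mem_insert p _
  have hq : q ∈ E ∩ sphere x t := hP ▸ mem_insert_of_mem p rfl
  exact ENNReal.toReal_le_of_le_ofReal dist_nonneg (hE.measure_le_dist inter_subset_left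
    (isCompact_ball_piece hE x t) ⟨hp.1, sphere_subset_closedBall hp.2⟩
    ⟨hq.1, sphere_subset_closedBall hq.2⟩ (hP ▸ closure_diff_ball_subset x t))

lemma IsMinimalSet.regular_of_mass_le (hE : IsMinimalSet n 1 E) (hred : IsReducedSet n 1 E)
    {x : Euc n} (hx : x ∈ E) {R : ℝ} (hR : 0 < R) (hm : mass E x R ≤ 2 * R) :
    ∃ v r, RegularAt E x v r := by
  classical
  obtain ⟨t, ht, P, hP, hcard⟩ : ∃ t ∈ Ioo (R / 2) R, ∃ P : Finset (Euc n),
      (P : Set (Euc n)) = E ∩ sphere x t ∧ P.card < 3 := by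
    by_contra hno
    push Not at hno
    have h1 := hE.mass_growth x (by linarith : R / 2 ≤ R) 3 hno
    have h2 := hE.two_mul_le_mass hred hx (by linarith : 0 ≤ R / 2)
    push_cast at h1
    linarith
  have ht0 : 0 < t := by linarith [ht.1]
  have h2 := hE.two_le_card hred hx ht0 hP
  obtain ⟨p, q, hpq, rfl⟩ := Finset.card_eq_two.1 (by omega : P.card = 2)
  have hP' : ({p, q} : Set (Euc n)) = E ∩ sphere x t := by rw [← hP]; simp
  have hp : p ∈ E ∩ sphere x t := hP' ▸ mem_insert p _
  have hq : q ∈ E ∩ sphere x t := hP' ▸ mem_insert_of_mem p rfl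
  have hmass := hE.mass_le_of_card_two hP'
  have hpx : dist p x = t := hp.2
  have hqx : dist q x = t := hq.2
  have hpq2 : dist p q = 2 * t := by
    have := hE.two_mul_le_mass hred hx ht0.le
    have := dist_triangle_right p q x
    linarith
  have hmid : x = midpoint ℝ p q := eq_midpoint_of_dist_eq_half (by rw [hpx, hpq2]; ring)
    (by rw [dist_comm, hqx, hpq2]; ring)
  have hseg := hE.eq_segment hred inter_subset_left
    (isCompact_ball_piece hE x t) ⟨hp.1, sphere_subset_closedBall hp.2⟩
    ⟨hq.1, sphere_subset_closedBall hq.2⟩ (hP' ▸ closure_diff_ball_subset x t)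
    ((hred.measure_pos hx ht0).trans_le
      (measure_mono (inter_subset_inter_right _ ball_subset_closedBall)))
  have hqe : q = x + t • (t⁻¹ • (q - x)) := by rw [smul_inv_smul₀ ht0.ne']; abel
  have hpe : p = x - t • (t⁻¹ • (q - x)) := by
    rw [smul_inv_smul₀ ht0.ne']
    have : p + q = (2 : ℝ) • x := by
      rw [hmid, midpoint_eq_smul_add, smul_smul]; norm_num
    rw [two_smul] at this
    rw [sub_sub_eq_add_sub, ← this]; abel
  refine ⟨t⁻¹ • (q - x), t, ht0, ?_, ?_⟩
  · rw [norm_smul, ← dist_eq_norm, hqx, norm_inv, Real.norm_eq_abs, abs_of_pos ht0,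
      inv_mul_cancel₀ ht0.ne']
  · rw [hseg, segment_eq_image']
    set v := t⁻¹ • (q - x)
    have hd : q - p = (2 * t) • v := by rw [hqe, hpe]; module
    ext y
    rw [mem_image, mem_ofPred_eq]
    constructor
    · rintro ⟨a, ha, rfl⟩
      refine ⟨(2 * a - 1) * t, ?_, ?_⟩
      · rw [abs_mul, abs_of_pos ht0]
        exact mul_le_of_le_one_left ht0.le (abs_le.2 ⟨by linarith [ha.1], by linarith [ha.2]⟩)
      · rw [hd, hpe]; module
    · rintro ⟨s, hs, rfl⟩
      obtain ⟨h1, h2⟩ := abs_le.1 hs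
      refine ⟨(s / t + 1) / 2, ⟨?_, ?_⟩, ?_⟩
      · have : -1 ≤ s / t := by rw [le_div_iff₀ ht0]; linarith
        linarith
      · have : s / t ≤ 1 := by rw [div_le_iff₀ ht0]; linarith
        linarith
      · have e : (s / t + 1) / 2 * (2 * t) = s + t := by field_simp
        rw [hd, ← mul_smul, e, hpe]; module

/-- A point of `E` is regular as soon as its density is at most `2` at one scale; otherwise every
sphere centred at it meets `E` in at least three points, and its density is `3` at all scales. -/
lemma IsMinimalSet.regular_or_triple (hE : IsMinimalSet n 1 E) (hred : IsReducedSet n 1 E)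
    {x : Euc n} (hx : x ∈ E) : (∃ v r, RegularAt E x v r) ∨ TripleAt E x ∧
      ∀ t : ℝ, 0 < t → ∀ P : Finset (Euc n), (P : Set (Euc n)) = E ∩ sphere x t → 3 ≤ P.card := by
  by_cases h : ∃ R, 0 < R ∧ mass E x R ≤ 2 * R
  · obtain ⟨R, hR, hm⟩ := h
    exact Or.inl (hE.regular_of_mass_le hred hx hR hm)
  · push Not at h
    have hcard : ∀ t : ℝ, 0 < t → ∀ P : Finset (Euc n), (P : Set (Euc n)) = E ∩ sphere x t →
        3 ≤ P.card := by
      classical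
      intro t ht P hP
      by_contra hlt
      have h2 := hE.two_le_card hred hx ht hP
      obtain ⟨p, q, hpq, rfl⟩ := Finset.card_eq_two.1 (by omega : P.card = 2)
      have hP' : ({p, q} : Set (Euc n)) = E ∩ sphere x t := by rw [← hP]; simp
      have hp : p ∈ E ∩ sphere x t := hP' ▸ mem_insert p _
      have hq : q ∈ E ∩ sphere x t := hP' ▸ mem_insert_of_mem p rfl
      have hpx : dist p x = t := hp.2
      have hqx : dist q x = t := hq.2
      have := hE.mass_le_of_card_two hP'
      have := dist_triangle_right p q x
      linarith [h t ht]
    refine Or.inr ⟨fun r hr => le_antisymm (hE.mass_le_three x hr) ?_, hcard⟩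
    have := hE.mass_growth x hr.le 3 fun t ht P hP => hcard t ht.1 P hP
    have h0 := mass_nonneg (E := E) x 0
    push_cast at this
    linarith

end DensityTwo

/-! ### Propagation along straight lines -/

section Global

variable {n : ℕ} {E : Set (Euc n)}

lemma RegularAt.neg {x v : Euc n} {r : ℝ} (h : RegularAt E x v r) : RegularAt E x (-v) r := by
  refine ⟨h.1, by rw [norm_neg]; exact h.2.1, h.2.2.trans ?_⟩
  ext y
  constructor
  · rintro ⟨s, hs, rfl⟩
    exact ⟨-s, by rwa [abs_neg], by module⟩
  · rintro ⟨s, hs, rfl⟩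
    exact ⟨-s, by rwa [abs_neg], by module⟩

lemma RegularAt.mem {x v : Euc n} {r s : ℝ} (h : RegularAt E x v r) (hs : |s| ≤ r) :
    x + s • v ∈ E := by
  have : x + s • v ∈ E ∩ closedBall x r := by rw [h.2.2]; exact ⟨s, hs, rfl⟩
  exact this.1

/-- If `E` contains a second point of a line near a regular point, then it contains the line
near this point. -/
lemma RegularAt.mem_of_mem {a w v : Euc n} {s s' r : ℝ} (h : RegularAt E (a + s • w) v r)
    (hw : ‖w‖ = 1) (hne : s' ≠ s) (hs' : |s' - s| ≤ r) (hmem : a + s' • w ∈ E) {u : ℝ}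
    (hu : |u - s| ≤ r) : a + u • w ∈ E := by
  have h1 : a + s' • w ∈ E ∩ closedBall (a + s • w) r := by
    refine ⟨hmem, mem_closedBall.2 ?_⟩
    have : a + s' • w - (a + s • w) = (s' - s) • w := by module
    rwa [dist_eq_norm, this, norm_smul, hw, mul_one]
  rw [h.2.2] at h1
  obtain ⟨σ, -, hσ⟩ := h1
  have hsub : s' - s ≠ 0 := sub_ne_zero.2 hne
  have h2 : (s' - s) • w = σ • v := by
    have : (s' - s) • w = a + s' • w - (a + s • w) := by module
    rw [this, hσ]; abel
  have h3 : w = ((s' - s)⁻¹ * σ) • v := by rw [mul_smul, ← h2, inv_smul_smul₀ hsub]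
  set c := (s' - s)⁻¹ * σ
  have hc : |c| = 1 := by
    have := congrArg norm h3
    rw [norm_smul, hw, h.2.1, mul_one] at this
    exact this.symm
  have h4 : a + u • w = (a + s • w) + ((u - s) * c) • v := by
    rw [mul_smul, ← h3]; module
  rw [h4]
  exact h.mem (by rwa [abs_mul, hc, mul_one])

lemma RegularAt.mem_nhds {a w : Euc n} {s r : ℝ} (h : RegularAt E (a + s • w) w r) :
    {u : ℝ | a + u • w ∈ E} ∈ 𝓝 s := by
  refine Filter.mem_of_superset (Metric.closedBall_mem_nhds s h.1) fun u hu => ?_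
  have h1 := h.mem (s := u - s) (by simpa [Real.dist_eq] using hu)
  have h2 : a + s • w + (u - s) • w = a + u • w := by module
  rwa [h2] at h1

/-- If all points of `E` on an open piece of a line are regular, and `E` contains the line near one
point, then it contains the whole piece. -/
lemma mem_of_regular (hE : IsMinimalSet n 1 E) {a w : Euc n} (hw : ‖w‖ = 1) {I : Set ℝ}
    (hI : IsPreconnected I)
    (hreg : ∀ s ∈ I, a + s • w ∈ E → ∃ v r, RegularAt E (a + s • w) v r) {s₀ : ℝ} (hs₀ : s₀ ∈ I)
    (hnhds : {u : ℝ | a + u • w ∈ E} ∈ 𝓝 s₀) {s : ℝ} (hs : s ∈ I) : a + s • w ∈ E := by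
  set S := {u : ℝ | a + u • w ∈ E} with hS
  have hScl : IsClosed S :=
    hE.1.preimage (continuous_const.add (continuous_id.smul continuous_const))
  have hsub : I ⊆ interior S := by
    refine hI.subset_of_closure_inter_subset isOpen_interior
      ⟨s₀, hs₀, mem_interior_iff_mem_nhds.2 hnhds⟩ ?_
    rintro s ⟨hs, hsI⟩
    have hsS : s ∈ S := closure_minimal interior_subset hScl hs
    obtain ⟨v, r, hr⟩ := hreg s hsI hsS
    obtain ⟨s', hs', hd⟩ := Metric.mem_closure_iff.1 hs r hr.1
    by_cases hne : s' = s
    · rwa [← hne]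
    · rw [mem_interior_iff_mem_nhds]
      refine Filter.mem_of_superset (Metric.closedBall_mem_nhds s hr.1) fun u hu => ?_
      rw [dist_comm, Real.dist_eq] at hd
      have hs'' : s' ∈ S := interior_subset hs'
      exact hr.mem_of_mem hw hne hd.le hs'' (by simpa [Real.dist_eq] using hu)
  have hsS : s ∈ S := interior_subset (hsub hs)
  exact hsS

lemma exists_dist_ray_eq {x y w : Euc n} (hw : ‖w‖ = 1) {t : ℝ} (ht : dist y x < t) :
    ∃ s : ℝ, 0 < s ∧ dist (y + s • w) x = t := by
  have hd : 0 ≤ dist y x := dist_nonneg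
  have hcont : Continuous fun s : ℝ => dist (y + s • w) x := by fun_prop
  have hle : (0 : ℝ) ≤ t + dist y x := by linarith
  have hend : t ≤ dist (y + (t + dist y x) • w) x := by
    have h1 := dist_triangle_right (y + (t + dist y x) • w) y x
    have h2 : dist (y + (t + dist y x) • w) y = t + dist y x := by
      rw [dist_eq_norm, add_sub_cancel_left, norm_smul, hw, mul_one, Real.norm_eq_abs,
        abs_of_nonneg hle]
    have h3 := dist_triangle (y + (t + dist y x) • w) x y
    rw [dist_comm x y] at h3
    linarith
  obtain ⟨s, hs, hst⟩ := intermediate_value_Icc hle hcont.continuousOn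
    (show t ∈ Icc _ _ from ⟨by simpa using ht.le, hend⟩)
  refine ⟨s, lt_of_le_of_ne hs.1 ?_, hst⟩
  rintro rfl
  simp only [zero_smul, add_zero] at hst
  exact ht.ne hst

/-- If all points of `E` are regular, then `E` is a line: two disjoint lines in `E` would give
`E` a density close to `4` at large scales. -/
lemma isLine_of_regular (hE : IsMinimalSet n 1 E) (hne : E.Nonempty)
    (hreg : ∀ x ∈ E, ∃ v r, RegularAt E x v r) : IsLine E := by
  have hline : ∀ x ∈ E, ∀ v r, RegularAt E x v r → ∀ s : ℝ, x + s • v ∈ E := by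
    intro x hx v r hr s
    refine mem_of_regular hE hr.2.1 isPreconnected_univ (fun s _ hs => hreg _ hs)
      (mem_univ (0 : ℝ)) ?_ (mem_univ s)
    refine RegularAt.mem_nhds (r := r) ?_
    rwa [zero_smul, add_zero]
  obtain ⟨x, hx⟩ := hne
  obtain ⟨v, r, hr⟩ := hreg x hx
  have hL := hline x hx v r hr
  refine ⟨x, v, fun h => by simpa [h] using hr.2.1, Subset.antisymm (fun y hy => ?_) ?_⟩
  swap
  · rintro _ ⟨t, rfl⟩
    exact hL t
  by_contra hyL
  have hyL : ∀ t : ℝ, y ≠ x + t • v := fun t h => hyL ⟨t, h⟩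
  obtain ⟨w, ρ, hρ⟩ := hreg y hy
  have hL' := hline y hy w ρ hρ
  have hw0 : w ≠ 0 := fun h => by simpa [h] using hρ.2.1
  have hv0 : v ≠ 0 := fun h => by simpa [h] using hr.2.1
  -- The two lines do not meet: near a common point, `E` is a single segment containing both.
  have hdisj : ∀ s t : ℝ, y + s • w ≠ x + t • v := by
    intro s t hst
    obtain ⟨u, δ, hδ⟩ := hreg _ (hL t)
    have hδ' : RegularAt E (y + s • w) u δ := by rwa [hst]
    have key : ∀ (a b : Euc n) (s : ℝ), RegularAt E (a + s • b) u δ → ‖b‖ = 1 →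
        (∀ s : ℝ, a + s • b ∈ E) → ∃ σ : ℝ, δ • b = σ • u := by
      intro a b s h hb hab
      have h1 : a + (s + δ) • b ∈ E ∩ closedBall (a + s • b) δ := by
        refine ⟨hab _, mem_closedBall.2 ?_⟩
        have : a + (s + δ) • b - (a + s • b) = δ • b := by module
        rw [dist_eq_norm, this, norm_smul, hb, mul_one, Real.norm_eq_abs, abs_of_pos h.1]
      rw [h.2.2] at h1
      obtain ⟨σ, -, hσ⟩ := h1
      refine ⟨σ, ?_⟩
      have : δ • b = a + (s + δ) • b - (a + s • b) := by module
      rw [this, hσ]; abel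
    obtain ⟨σ, hσ⟩ := key x v t hδ hr.2.1 hL
    obtain ⟨τ, hτ⟩ := key y w s hδ' hρ.2.1 hL'
    have hσ0 : σ ≠ 0 := by
      rintro rfl
      rw [zero_smul] at hσ
      exact (smul_ne_zero hδ.1.ne' hv0) hσ
    have hδ0 := hδ.1.ne'
    have hwv : w = (τ / σ) • v := by
      have h1 : u = (δ / σ) • v := by
        rw [div_eq_inv_mul, mul_smul, hσ, inv_smul_smul₀ hσ0]
      have h2 : w = (δ⁻¹ * τ) • u := by rw [mul_smul, ← hτ, inv_smul_smul₀ hδ0]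
      rw [h2, h1, smul_smul]
      congr 1
      field_simp
    refine hyL (t - s * (τ / σ)) ?_
    rw [eq_sub_of_add_eq hst]
    nth_rw 1 [hwv]
    module
  have hd : 0 < dist y x := dist_pos.2 fun h => hyL 0 (by simpa using h)
  have hgrow := hE.mass_growth x (by linarith : dist y x ≤ 5 * dist y x) 4 fun t ht P hP => by
    classical
    have ht0 : 0 < t := hd.trans ht.1
    obtain ⟨s₁, hs₁, h1⟩ := exists_dist_ray_eq (x := x) (y := y) hρ.2.1 ht.1
    obtain ⟨s₂, hs₂, h2⟩ := exists_dist_ray_eq (x := x) (y := y) (w := -w)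
      (by rw [norm_neg]; exact hρ.2.1) ht.1
    have e2 : y + s₂ • (-w) = y + (-s₂) • w := by module
    rw [e2] at h2
    have hsub : ({x + t • v, x + (-t) • v, y + s₁ • w, y + (-s₂) • w} : Finset (Euc n)) ⊆ P := by
      intro z hz
      rw [← Finset.mem_coe, hP]
      simp only [Finset.mem_insert, Finset.mem_singleton] at hz
      rcases hz with rfl | rfl | rfl | rfl
      · exact ⟨hL _, by simp [norm_smul, hr.2.1, abs_of_pos ht0]⟩
      · exact ⟨hL _, by simp [norm_smul, hr.2.1, abs_of_pos ht0]⟩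
      · exact ⟨hL' _, h1⟩
      · exact ⟨hL' _, h2⟩
    refine le_trans (le_of_eq ?_) (Finset.card_le_card hsub)
    have hvne : x + t • v ≠ x + (-t) • v := fun h => by
      have := smul_left_injective ℝ hv0 (add_left_cancel h)
      linarith
    have hwne : y + s₁ • w ≠ y + (-s₂) • w := fun h => by
      have := smul_left_injective ℝ hw0 (add_left_cancel h)
      linarith
    rw [Finset.card_insert_of_notMem, Finset.card_insert_of_notMem, Finset.card_pair hwne]
    · simp only [Finset.mem_insert, Finset.mem_singleton, not_or]
      exact ⟨(hdisj _ _).symm, (hdisj _ _).symm⟩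
    · simp only [Finset.mem_insert, Finset.mem_singleton, not_or]
      exact ⟨hvne, (hdisj _ _).symm, (hdisj _ _).symm⟩
  have h3 := hE.mass_le_three x (by linarith : 0 < 5 * dist y x)
  have h0 := mass_nonneg (E := E) x (dist y x)
  push_cast at hgrow
  linarith

/-! ### Triple points -/

lemma TripleAt.three_le_card (hE : IsMinimalSet n 1 E) {x : Euc n} (h3 : TripleAt E x) {t : ℝ}
    (ht : 0 < t) {P : Finset (Euc n)} (hP : (P : Set (Euc n)) = E ∩ sphere x t) :
    3 ≤ P.card := by
  have h := hE.mass_le_card hP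
  rw [h3 t ht, mul_comm, mul_le_mul_iff_right₀ ht] at h
  exact_mod_cast h

/-- Near a regular point `z`, the spheres centred at a triple point `x` are crossed orthogonally:
otherwise the length of `E` in thin shells near `z` would grow at a rate larger than `3`. -/
lemma TripleAt.norm_le_inner (hE : IsMinimalSet n 1 E) {x : Euc n} (h3 : TripleAt E x)
    {z w : Euc n} {ρ : ℝ} (hzx : z ≠ x) (hreg : RegularAt E z w ρ) (h0 : 0 ≤ ⟪w, z - x⟫_ℝ) :
    ‖z - x‖ ≤ ⟪w, z - x⟫_ℝ := by
  classical
  by_contra hlt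
  push Not at hlt
  have hρ := hreg.1
  set c := ⟪w, z - x⟫_ℝ with hc
  set a := ‖z - x‖ with ha
  have ha0 : 0 < a := norm_pos_iff.2 (sub_ne_zero.2 hzx)
  have hsq : ∀ s : ℝ, dist (z + s • w) x ^ 2 = a ^ 2 + 2 * s * c + s ^ 2 := by
    intro s
    have : z + s • w - x = (z - x) + s • w := by abel
    rw [dist_eq_norm, this, norm_add_sq_real, inner_smul_right, real_inner_comm, norm_smul,
      hreg.2.1, mul_one, Real.norm_eq_abs, sq_abs]
    ring
  set b := dist (z + ρ • w) x with hb
  have hb0 : 0 ≤ b := dist_nonneg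
  have hbs := hsq ρ
  have hba : b < a + ρ := by
    by_contra h
    push Not at h
    nlinarith
  have hab : a < b := by
    by_contra h
    push Not at h
    nlinarith
  set S : Set (Euc n) := (fun s : ℝ => z + s • w) '' Icc 0 ρ with hS
  have hSm : MeasurableSet S :=
    (isCompact_Icc.image (by fun_prop : Continuous fun s : ℝ => z + s • w)).isClosed.measurableSet
  have hSE : S ⊆ E := by
    rintro _ ⟨s, hs, rfl⟩
    exact hreg.mem (by rw [abs_of_nonneg hs.1]; exact hs.2)
  -- The distance to `x` is strictly increasing along `S`.
  have hinj : ∀ s ∈ Icc 0 ρ, ∀ s' ∈ Icc 0 ρ, dist (z + s • w) x = dist (z + s' • w) x →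
      s = s' := by
    intro s hs s' hs' h
    have h1 := hsq s
    have h2 := hsq s'
    rw [h] at h1
    have h4 : (s - s') * (2 * c + (s + s')) = 0 := by linarith
    rcases mul_eq_zero.1 h4 with h5 | h5
    · linarith
    · linarith [hs.1, hs'.1]
  set A : Set (Euc n) := {y | a < dist y x ∧ dist y x ≤ b} with hA
  have h1 : ENNReal.ofReal ρ ≤ μH[1] ((E ∩ A) ∩ S) := by
    have := le_measure_of_slices (a := 0) (b := ρ) ((E ∩ A) ∩ S) z
      (Eventually.of_forall fun s hs => by
        have hsS : z + s • w ∈ S := ⟨s, ⟨hs.1.le, hs.2.le⟩, rfl⟩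
        refine ⟨z + s • w, ⟨⟨hSE hsS, ?_, ?_⟩, hsS⟩, ?_⟩
        · by_contra h
          push Not at h
          have := hsq s
          have : 0 ≤ dist (z + s • w) x := dist_nonneg
          nlinarith [hs.1]
        · by_contra h
          push Not at h
          have := hsq s
          nlinarith [hs.1, hs.2]
        · rw [dist_eq_norm, add_sub_cancel_left, norm_smul, hreg.2.1, mul_one, Real.norm_eq_abs,
            abs_of_pos hs.1])
    rwa [sub_zero] at this
  have h2 : ENNReal.ofReal (2 * (b - a)) ≤ μH[1] ((E ∩ A) \ S) := by
    have := hE.le_measure_shell x (E \ S) (a := a) (b := b) 2 fun t ht P hP => by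
      have hcard := h3.three_le_card hE (ha0.trans ht.1) hP
      refine ⟨P.filter (· ∉ S), ?_, ?_⟩
      · intro y hy
        obtain ⟨hyP, hyS⟩ := Finset.mem_filter.1 (Finset.mem_coe.1 hy)
        have : y ∈ E ∩ sphere x t := hP ▸ hyP
        exact ⟨⟨this.1, hyS⟩, this.2⟩
      · have hle : (P.filter (· ∈ S)).card ≤ 1 := by
          rw [Finset.card_le_one]
          intro y hy y' hy'
          obtain ⟨hyP, s, hs, rfl⟩ := Finset.mem_filter.1 hy
          obtain ⟨hyP', s', hs', rfl⟩ := Finset.mem_filter.1 hy'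
          have e1 : z + s • w ∈ E ∩ sphere x t := hP ▸ hyP
          have e2 : z + s' • w ∈ E ∩ sphere x t := hP ▸ hyP'
          have e1 : dist (z + s • w) x = t := e1.2
          have e2 : dist (z + s' • w) x = t := e2.2
          have := hinj s hs s' hs' (e1.trans e2.symm)
          simp only [this]
        have := Finset.card_filter_add_card_filter_not (s := P) (· ∈ S)
        omega
    refine (le_trans (by push_cast; exact le_rfl) this).trans (measure_mono ?_)
    rintro y ⟨⟨hyE, hyS⟩, hyA⟩
    exact ⟨⟨hyE, hyA⟩, hyS⟩
  have hsum := measure_inter_add_sdiff (μ := μH[1]) (E ∩ A) hSm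
  rw [hA, hE.mass_shell x hab.le, h3 a ha0, h3 b (ha0.trans hab)] at hsum
  have h4 := (add_le_add h1 h2).trans hsum.le
  rw [← ENNReal.ofReal_add hρ.le (by linarith), ENNReal.ofReal_le_ofReal_iff (by linarith)] at h4
  linarith

lemma TripleAt.radial (hE : IsMinimalSet n 1 E) {x : Euc n} (h3 : TripleAt E x)
    {z w : Euc n} {ρ : ℝ} (hzx : z ≠ x) (hreg : RegularAt E z w ρ) :
    ∃ w', RegularAt E z w' ρ ∧ (w' = w ∨ w' = -w) ∧ z - x = ‖z - x‖ • w' := by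
  have key : ∀ w', RegularAt E z w' ρ → 0 ≤ ⟪w', z - x⟫_ℝ → z - x = ‖z - x‖ • w' := by
    intro w' hw' h0
    have h1 := h3.norm_le_inner hE hzx hw' h0
    have h2 : ⟪w', z - x⟫_ℝ = ‖w'‖ * ‖z - x‖ :=
      le_antisymm (real_inner_le_norm _ _) (by rw [hw'.2.1, one_mul]; exact h1)
    rw [inner_eq_norm_mul_iff_real, hw'.2.1, one_smul] at h2
    exact h2.symm
  rcases le_total 0 ⟪w, z - x⟫_ℝ with h | h
  · exact ⟨w, hreg, Or.inl rfl, key w hreg h⟩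
  · exact ⟨-w, hreg.neg, Or.inr rfl, key (-w) hreg.neg (by rw [inner_neg_left]; linarith)⟩

/-- Two points of `E` on a sphere that `E` meets in three points, centred at a triple point, are
seen from the centre under an angle of at least `120°`. -/
lemma TripleAt.inner_le (hE : IsMinimalSet n 1 E) {x : Euc n} (h3 : TripleAt E x) {r : ℝ}
    (hr : 0 < r) {P : Finset (Euc n)} (hP : (P : Set (Euc n)) = E ∩ sphere x r)
    (hcard : P.card = 3) {v w : Euc n} (hv : ‖v‖ = 1) (hw : ‖w‖ = 1) (hvP : x + r • v ∈ P)
    (hwP : x + r • w ∈ P) (hne : v ≠ w) : ⟪v, w⟫_ℝ ≤ -(1 / 2) := by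
  by_contra hlt
  push Not at hlt
  have hs := norm_sq_add_of_unit hv hw
  set h := ‖v + w‖ with hh
  have hh0 : 0 ≤ h := norm_nonneg _
  have h1 : 1 < h := by
    by_contra h'
    push Not at h'
    nlinarith
  have hl0 : 0 < (h - 1) / (2 * h) := div_pos (by linarith) (by linarith)
  have hl1 : (h - 1) / (2 * h) ≤ 1 := by rw [div_le_one (by linarith)]; linarith
  have h2 := hE.mass_le_pair hr hP hv hw hvP hwP hne hl0.le hl1
  rw [h3 r hr, hcard] at h2
  have h4 : h * (1 - (h - 1) / (2 * h)) - 1 = (h - 1) / 2 := by field_simp; ring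
  rw [← hh, h4] at h2
  have h5 : 0 < (h - 1) / (2 * h) * h * ((h - 1) / 2) := by
    have : 0 < h - 1 := by linarith
    positivity
  push_cast at h2
  nlinarith [mul_pos hr h5]

lemma TripleAt.exists_directions (hE : IsMinimalSet n 1 E) {x : Euc n} (h3 : TripleAt E x) :
    ∃ r : ℝ, 0 < r ∧ ∃ v : Fin 3 → Euc n, (∀ j, ‖v j‖ = 1) ∧
      (∀ i j, i ≠ j → ⟪v i, v j⟫_ℝ = -(1 / 2)) ∧
      ∀ y, y ∈ E ∩ sphere x r ↔ ∃ j, y = x + r • v j := by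
  classical
  obtain ⟨r, hr, P, hP, hcard⟩ : ∃ r ∈ Ioo (1 : ℝ) 2, ∃ P : Finset (Euc n),
      (P : Set (Euc n)) = E ∩ sphere x r ∧ P.card < 4 := by
    by_contra hno
    push Not at hno
    have h1 := hE.mass_growth x (by norm_num : (1 : ℝ) ≤ 2) 4 hno
    rw [h3 1 (by norm_num), h3 2 (by norm_num)] at h1
    norm_num at h1
  have hr0 : 0 < r := by linarith [hr.1]
  have hcard3 : P.card = 3 := by
    have := h3.three_le_card hE hr0 hP
    omega
  obtain ⟨p, q, s, hpq, hps, hqs, rfl⟩ := Finset.card_eq_three.1 hcard3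
  have hdir : ∀ y ∈ ({p, q, s} : Finset (Euc n)), ‖r⁻¹ • (y - x)‖ = 1 ∧
      x + r • (r⁻¹ • (y - x)) = y := by
    intro y hy
    have : y ∈ E ∩ sphere x r := hP ▸ hy
    have hyx : dist y x = r := this.2
    constructor
    · rw [norm_smul, ← dist_eq_norm, hyx, norm_inv, Real.norm_eq_abs, abs_of_pos hr0,
        inv_mul_cancel₀ hr0.ne']
    · rw [smul_inv_smul₀ hr0.ne']; abel
  have hin : ∀ y ∈ ({p, q, s} : Finset (Euc n)), ∀ z ∈ ({p, q, s} : Finset (Euc n)), y ≠ z →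
      ⟪r⁻¹ • (y - x), r⁻¹ • (z - x)⟫_ℝ ≤ -(1 / 2) := by
    intro y hy z hz hyz
    refine h3.inner_le hE hr0 hP hcard3 (hdir y hy).1 (hdir z hz).1 (by rwa [(hdir y hy).2])
      (by rwa [(hdir z hz).2]) fun h => hyz ?_
    rw [← (hdir y hy).2, h, (hdir z hz).2]
  have hpm : p ∈ ({p, q, s} : Finset (Euc n)) := by simp
  have hqm : q ∈ ({p, q, s} : Finset (Euc n)) := by simp
  have hsm : s ∈ ({p, q, s} : Finset (Euc n)) := by simp
  have i1 := hin p hpm q hqm hpq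
  have i2 := hin p hpm s hsm hps
  have i3 := hin q hqm s hsm hqs
  have n1 := (hdir p hpm).1
  have n2 := (hdir q hqm).1
  have n3 := (hdir s hsm).1
  have e1 := (hdir p hpm).2
  have e2 := (hdir q hqm).2
  have e3 := (hdir s hsm).2
  set a := r⁻¹ • (p - x)
  set b := r⁻¹ • (q - x)
  set c := r⁻¹ • (s - x)
  have hsum : ‖a + b + c‖ ^ 2 = 3 + 2 * (⟪a, b⟫_ℝ + ⟪a, c⟫_ℝ + ⟪b, c⟫_ℝ) := by
    rw [norm_add_sq_real, norm_add_sq_real, inner_add_left, n1, n2, n3]; ring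
  have hnn := sq_nonneg ‖a + b + c‖
  refine ⟨r, hr0, ![a, b, c], ?_, ?_, ?_⟩
  · intro j
    fin_cases j
    · exact n1
    · exact n2
    · exact n3
  · have j1 : ⟪a, b⟫_ℝ = -(1 / 2) := by linarith
    have j2 : ⟪a, c⟫_ℝ = -(1 / 2) := by linarith
    have j3 : ⟪b, c⟫_ℝ = -(1 / 2) := by linarith
    intro i j hij
    fin_cases i <;> fin_cases j
    · exact absurd rfl hij
    · exact j1
    · exact j2
    · exact (real_inner_comm _ _).trans j1
    · exact absurd rfl hij
    · exact j3
    · exact (real_inner_comm _ _).trans j2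
    · exact (real_inner_comm _ _).trans j3
    · exact absurd rfl hij
  · intro y
    rw [← hP, Fin.exists_fin_succ, Fin.exists_fin_two]
    simp [e1, e2, e3]

/-- `E` has at most one triple point. With two of them, at least two of the three points of `E` on
a suitable sphere about the first would also be triple points, since a regular point must be aligned
with both; this gives too much length in a ball. -/
lemma TripleAt.unique (hE : IsMinimalSet n 1 E) (hred : IsReducedSet n 1 E) {x y : Euc n}
    (hx : TripleAt E x) (hy : TripleAt E y) : x = y := by
  by_contra hxy
  obtain ⟨r, hr, v, hv, hin, hsph⟩ := hx.exists_directions hE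
  have hmem : ∀ j, x + r • v j ∈ E := fun j => ((hsph _).2 ⟨j, rfl⟩).1
  have hnx : ∀ j, x + r • v j ≠ x := fun j h => by
    have h1 : r • v j = 0 := by simpa using h
    have h2 := congrArg norm h1
    rw [norm_smul, hv, mul_one, norm_zero, norm_eq_zero] at h2
    exact hr.ne' h2
  have hor : ∀ j, TripleAt E (x + r • v j) ∨ ∃ c : ℝ, y - x = c • v j := by
    intro j
    by_cases hjy : x + r • v j = y
    · left; rwa [hjy]
    rcases hE.regular_or_triple hred (hmem j) with ⟨w, ρ, hreg⟩ | h
    · right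
      obtain ⟨w₁, -, hw₁, h1⟩ := hx.radial hE (hnx j) hreg
      obtain ⟨w₂, -, hw₂, h2⟩ := hy.radial hE hjy hreg
      have e1 : x + r • v j - x = r • v j := by abel
      rw [e1, norm_smul, hv, mul_one, Real.norm_eq_abs, abs_of_pos hr] at h1
      have e2 : v j = w₁ := smul_right_injective _ hr.ne' h1
      have e3 : ∃ d : ℝ, x + r • v j - y = d • v j := by
        rcases hw₁ with hw₁ | hw₁ <;> rcases hw₂ with hw₂ | hw₂
        · exact ⟨_, h2.trans (by rw [hw₂, e2, hw₁])⟩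
        · exact ⟨-‖x + r • v j - y‖, h2.trans (by rw [hw₂, e2, hw₁]; module)⟩
        · exact ⟨-‖x + r • v j - y‖, h2.trans (by rw [hw₂, e2, hw₁]; module)⟩
        · exact ⟨_, h2.trans (by rw [hw₂, e2, hw₁])⟩
      obtain ⟨d, hd⟩ := e3
      refine ⟨r - d, ?_⟩
      rw [sub_smul, ← hd]; abel
    · exact Or.inl h.1
  have hpair : ∀ i j, i ≠ j → TripleAt E (x + r • v i) ∨ TripleAt E (x + r • v j) := by
    intro i j hij
    rcases hor i with h | ⟨c, hc⟩
    · exact Or.inl h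
    rcases hor j with h | ⟨d, hd⟩
    · exact Or.inr h
    exfalso
    have e := hc.symm.trans hd
    have h1 := congrArg (fun z => ⟪v i, z⟫_ℝ) e
    have h2 := congrArg (fun z => ⟪v j, z⟫_ℝ) e
    simp only [inner_smul_right, real_inner_self_eq_norm_sq, hv, hin i j hij,
      hin j i hij.symm] at h1 h2
    have hc0 : c = 0 := by linarith
    rw [hc0, zero_smul] at hc
    exact hxy (sub_eq_zero.1 hc).symm
  set B : Fin 3 → Set (Euc n) := fun j => E ∩ closedBall (x + r • v j) (3 / 4 * r) with hB
  have hdisj : Pairwise (Function.onFun Disjoint B) := by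
    intro i j hij
    refine Disjoint.mono inter_subset_right inter_subset_right (closedBall_disjoint_closedBall ?_)
    have e : x + r • v i - (x + r • v j) = r • (v i - v j) := by module
    rw [dist_eq_norm, e, norm_smul, Real.norm_eq_abs, abs_of_pos hr]
    have h1 : ‖v i - v j‖ ^ 2 = 3 := by
      rw [norm_sub_sq_real, hv, hv, hin i j hij]; norm_num
    have h2 : 3 / 2 < ‖v i - v j‖ := by
      by_contra h
      push Not at h
      nlinarith [norm_nonneg (v i - v j)]
    nlinarith
  have hsum : ∑ j, mass E (x + r • v j) (3 / 4 * r) ≤ mass E x (7 / 4 * r) := by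
    have h1 := measure_iUnion (μ := μH[1]) hdisj
      fun j => (hE.1.inter isClosed_closedBall).measurableSet
    have h2 : μH[1] (⋃ j, B j) ≤ μH[1] (E ∩ closedBall x (7 / 4 * r)) := by
      refine measure_mono (iUnion_subset fun j => inter_subset_inter_right _
        (closedBall_subset_closedBall' ?_))
      rw [dist_eq_norm, add_sub_cancel_left, norm_smul, hv, mul_one, Real.norm_eq_abs,
        abs_of_pos hr]
      linarith
    rw [h1, tsum_fintype] at h2
    have h4 := ENNReal.toReal_mono (hE.ball_ne_top x _) h2
    rwa [ENNReal.toReal_sum fun j _ => hE.ball_ne_top _ _] at h4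
  rw [Fin.sum_univ_three, hx _ (by linarith)] at hsum
  have hge : ∀ j, 2 * (3 / 4 * r) ≤ mass E (x + r • v j) (3 / 4 * r) := fun j =>
    hE.two_mul_le_mass hred (hmem j) (by linarith)
  have htr : ∀ j, TripleAt E (x + r • v j) → mass E (x + r • v j) (3 / 4 * r) = 3 * (3 / 4 * r) :=
    fun j h => h _ (by linarith)
  have g0 := hge 0
  have g1 := hge 1
  have g2 := hge 2
  rcases hpair 0 1 (by decide) with h | h <;> rcases hpair 0 2 (by decide) with h' | h' <;>
    rcases hpair 1 2 (by decide) with h'' | h'' <;>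
    linarith [htr _ h, htr _ h', htr _ h'']

lemma TripleAt.isYSet (hE : IsMinimalSet n 1 E) (hred : IsReducedSet n 1 E) {x : Euc n}
    (hxE : x ∈ E) (hx : TripleAt E x) : IsYSet E := by
  have hreg : ∀ z ∈ E, z ≠ x → ∃ w ρ, RegularAt E z w ρ ∧ z - x = ‖z - x‖ • w := by
    intro z hz hzx
    rcases hE.regular_or_triple hred hz with ⟨w, ρ, h⟩ | h
    · obtain ⟨w', h1, -, h2⟩ := hx.radial hE hzx h
      exact ⟨w', ρ, h1, h2⟩
    · exact absurd (h.1.unique hE hred hx) hzx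
  have hray : ∀ z ∈ E, ∀ (w : Euc n) (t : ℝ), ‖w‖ = 1 → 0 < t → z = x + t • w →
      ∀ s : ℝ, 0 < s → x + s • w ∈ E := by
    intro z hz w t hw ht hzt s hs
    have hne : ∀ s : ℝ, 0 < s → x + s • w ≠ x := fun s hs h => by
      have h1 : s • w = 0 := by simpa using h
      have h2 := congrArg norm h1
      rw [norm_smul, hw, mul_one, norm_zero, norm_eq_zero] at h2
      exact hs.ne' h2
    refine mem_of_regular hE hw isPreconnected_Ioi
      (fun s hs hsE => ?_) (mem_Ioi.2 ht) ?_ (mem_Ioi.2 hs)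
    · obtain ⟨v, r, hr, -⟩ := hreg _ hsE (hne s hs)
      exact ⟨v, r, hr⟩
    · obtain ⟨v, r, hr, hv⟩ := hreg z hz (hzt ▸ hne t ht)
      have e : z - x = t • w := by rw [hzt]; abel
      rw [e, norm_smul, hw, mul_one, Real.norm_eq_abs, abs_of_pos ht] at hv
      have e2 : w = v := smul_right_injective _ ht.ne' hv
      rw [← e2, hzt] at hr
      exact hr.mem_nhds
  obtain ⟨r, hr, v, hv, hin, hsph⟩ := hx.exists_directions hE
  refine ⟨x, v, hv, hin, Subset.antisymm (fun z hz => ?_) ?_⟩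
  · rw [mem_iUnion]
    by_cases hzx : z = x
    · exact ⟨0, 0, le_rfl, by rw [hzx]; simp⟩
    have hpos : 0 < ‖z - x‖ := norm_pos_iff.2 (sub_ne_zero.2 hzx)
    obtain ⟨w, ρ, hw, hzw⟩ := hreg z hz hzx
    have h1 := hray z hz w ‖z - x‖ hw.2.1 hpos (by rw [← hzw]; abel) r hr
    have h2 : x + r • w ∈ sphere x r := by
      simp [norm_smul, hw.2.1, abs_of_pos hr]
    obtain ⟨j, hj⟩ := (hsph _).1 ⟨h1, h2⟩
    have h3 : w = v j := smul_right_injective _ hr.ne' (add_left_cancel hj)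
    exact ⟨j, ‖z - x‖, hpos.le, by rw [← h3, ← hzw]; abel⟩
  · refine iUnion_subset fun j => ?_
    rintro _ ⟨t, ht, rfl⟩
    rcases ht.eq_or_lt with rfl | ht
    · simpa using hxE
    · exact hray _ ((hsph _).2 ⟨j, rfl⟩).1 (v j) r (hv j) hr rfl t ht

end Global

/-- **Theorem 10.1.** Every nonempty reduced minimal set of dimension 1 in `ℝⁿ` is a
line or a Y-set. -/
theorem one_dimensional_minimal_sets (n : ℕ) (E : Set (Euc n))
    (hmin : IsMinimalSet n 1 E) (hred : IsReducedSet n 1 E) (hne : E.Nonempty) :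
    IsLine E ∨ IsYSet E := by
  by_cases h : ∃ x ∈ E, TripleAt E x
  · obtain ⟨x, hx, h3⟩ := h
    exact Or.inr (h3.isYSet hmin hred hx)
  · push Not at h
    exact Or.inl (isLine_of_regular hmin hne fun x hx =>
      (hmin.regular_or_triple hred hx).resolve_right fun h3 => h x hx h3.1)
end
end

section
/- Let U ⊆ ℝⁿ be open, let h be a gauge function, and let E ⊆ U be a closed set with H^d(E ∩ B) < ∞ for every compact ball B ⊆ U. Then E is an A-almost-minimal set of dimension d in U with gauge function h if and only if E is an A'-almost-minimal set of dimension d in U with gauge function h; that is, the condition 'for every δ > 0 and every admissible δ-deformation {φ_t} in U, H^d(E ∩ W₁) ≤ H^d(φ₁(E ∩ W₁)) + h(δ) δ^d, where W₁ = {x ∈ U : φ₁(x) ≠ x}' holds if and only if the condition 'for every δ > 0 and every admissible δ-deformation {φ_t} in U, H^d(E ∖ φ₁(E)) ≤ H^d(φ₁(E) ∖ E) + h(δ) δ^d' holds. -/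
/-!
Write `W = W₁`, `φ = φ₁`. Since `φ` is the identity on `E \ W`, one has `E \ φ(E) ⊆ W`,
`φ(E) \ E ⊆ φ(E ∩ W)` and `E ∩ W ∩ φ(E) ⊆ φ(E ∩ W)`, so the A'-inequality for a deformation gives
the A-inequality for the same deformation: split `E ∩ W` along `φ(E)` and `φ(E ∩ W)` along `E`.

The converse is not pointwise in the deformation, because `φ(E ∩ W)` may cover part of the
fixed set `E \ W`. The remedy is to make (almost) every point of a neighbourhood `V` of `Ŵ` move.
Let `K` be the closure of `Ŵ` and `V = {x : dist(x, K) < r}` with `r` so small that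
`diam V < δ` and the closure of `V` is a compact subset of `U`. The map
`f_s(x) = x + s · max(0, r - dist(x, K)) · v`, with `v` a unit vector, is the identity
outside `V`, maps `V` to itself, and is `(1 + s)`-Lipschitz. Hence `f_{ts} ∘ φ_t` is again an
admissible `δ`-deformation. The fixed-point sets of `f_s ∘ φ` in `E ∩ V` are disjoint for distinct
`s`, and `H^d(E ∩ V) < ∞`, so for all but countably many `s` they are negligible and the
A-inequality for `f_s ∘ φ` reads `H^d(E ∩ V) ≤ (1 + s)^d H^d(φ(E ∩ V)) + h(δ) δ^d`. Letting `s → 0`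
(`measure_le_image_nhd`) and removing the common part `E ∩ V ∩ φ(E)`, which has finite measure,
gives the A'-inequality.
-/

open MeasureTheory Metric Set Filter Bornology
open scoped ENNReal NNReal Topology InnerProductSpace

noncomputable section

/-- The set `W_t = {x ∈ U : φ_t x ≠ x}` associated with a one-parameter family of maps. -/
def defW {n : ℕ} (U : Set (Euc n)) (φ : ℝ → Euc n → Euc n) (t : ℝ) : Set (Euc n) :=
  {x ∈ U | φ t x ≠ x}

/-- The set `Ŵ = ⋃_{t ∈ [0,1]} (W_t ∪ φ_t(W_t))`. -/
def defWhat {n : ℕ} (U : Set (Euc n)) (φ : ℝ → Euc n → Euc n) : Set (Euc n) :=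
  ⋃ t ∈ Icc (0:ℝ) 1, (defW U φ t ∪ φ t '' defW U φ t)

/-- An admissible `δ`-deformation in `U`: a one-parameter family `φ_t : U → U`,
`t ∈ [0,1]`, with `φ_0 = id`, jointly continuous, `φ_1` Lipschitz, and such that
`Ŵ` is relatively compact in `U` with `diam Ŵ < δ`. -/
def IsAdmissibleDef {n : ℕ} (U : Set (Euc n)) (δ : ℝ) (φ : ℝ → Euc n → Euc n) : Prop :=
  (∀ t ∈ Icc (0:ℝ) 1, MapsTo (φ t) U U) ∧
  (∀ x ∈ U, φ 0 x = x) ∧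
  ContinuousOn (fun p : ℝ × Euc n => φ p.1 p.2) (Icc (0:ℝ) 1 ×ˢ U) ∧
  (∃ K : ℝ≥0, LipschitzOnWith K (φ 1) U) ∧
  IsCompact (closure (defWhat U φ)) ∧
  closure (defWhat U φ) ⊆ U ∧
  Metric.diam (defWhat U φ) < δ

/-- A gauge function: nondecreasing on `(0,∞)`, with values in `[0,∞]` and limit `0` at `0⁺`. -/
def IsGaugeFn (h : ℝ → ℝ≥0∞) : Prop :=
  (∀ ⦃s t : ℝ⦄, 0 < s → s ≤ t → h s ≤ h t) ∧ Tendsto h (𝓝[>] (0:ℝ)) (𝓝 0)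

/-! ### Pushing a neighbourhood of a set in a fixed direction -/

/-- The map `x ↦ x + s · max(0, r - dist(x, K)) · v`, which translates points of the open
`r`-neighbourhood of `K` by a positive multiple of `s • v` and fixes all other points. -/
def push {n : ℕ} (K : Set (Euc n)) (r : ℝ) (v : Euc n) (s : ℝ) (x : Euc n) : Euc n :=
  x + (s * max 0 (r - infDist x K)) • v

lemma push_zero {n : ℕ} (K : Set (Euc n)) (r : ℝ) (v x : Euc n) : push K r v 0 x = x := by
  simp [push]

lemma push_eq_self {n : ℕ} {K : Set (Euc n)} {r : ℝ} {v x : Euc n} {s : ℝ}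
    (hx : r ≤ infDist x K) : push K r v s x = x := by
  simp [push, max_eq_left (sub_nonpos.2 hx)]

lemma push_continuous {n : ℕ} (K : Set (Euc n)) (r : ℝ) (v : Euc n) :
    Continuous (fun p : ℝ × Euc n => push K r v p.1 p.2) := by
  unfold push
  have : Continuous (fun x : Euc n => infDist x K) := continuous_infDist_pt K
  fun_prop

lemma push_lipschitz {n : ℕ} (K : Set (Euc n)) (r : ℝ) {v : Euc n} (hv : ‖v‖ = 1) (s : ℝ≥0) :
    LipschitzWith (1 + s) (push K r v s) := by
  have hη : LipschitzWith 1 (fun x : Euc n => max 0 (r - infDist x K)) := by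
    have h1 : LipschitzWith 1 (fun x : Euc n => r - infDist x K) := by
      refine LipschitzWith.of_dist_le_mul fun x y => ?_
      have := (lipschitz_infDist_pt K).dist_le_mul x y
      rw [dist_sub_left]
      exact this
    exact h1.const_max 0
  refine LipschitzWith.id.add (LipschitzWith.of_dist_le_mul fun x y => ?_)
  have := hη.dist_le_mul x y
  rw [dist_eq_norm, ← sub_smul, norm_smul, hv, mul_one, ← mul_sub, norm_mul, ← dist_eq_norm]
  simp only [NNReal.coe_one, one_mul] at this
  simp only [Real.norm_eq_abs, NNReal.abs_eq]
  gcongr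

lemma push_infDist_lt {n : ℕ} {K : Set (Euc n)} {r : ℝ} {v x : Euc n} (hv : ‖v‖ = 1) {s : ℝ}
    (hs0 : 0 ≤ s) (hs1 : s < 1) (hx : infDist x K < r) : infDist (push K r v s x) K < r := by
  have h1 : infDist (push K r v s x) K ≤ infDist x K + dist (push K r v s x) x :=
    infDist_le_infDist_add_dist
  have h2 : dist (push K r v s x) x = s * (r - infDist x K) := by
    rw [push, dist_eq_norm, add_sub_cancel_left, norm_smul, hv, mul_one, max_eq_right (by linarith),
      Real.norm_of_nonneg (mul_nonneg hs0 (by linarith))]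
  nlinarith

/-- Distinct parameters push a point of the neighbourhood to distinct places. -/
lemma push_param_inj {n : ℕ} {K : Set (Euc n)} {r : ℝ} {v x : Euc n} (hv : ‖v‖ = 1)
    (hx : infDist x K < r) {s t : ℝ} (hst : push K r v s x = push K r v t x) : s = t := by
  have hv0 : v ≠ 0 := by rintro rfl; simp at hv
  have h1 := smul_left_injective ℝ hv0 (add_left_cancel hst)
  have h2 : max 0 (r - infDist x K) ≠ 0 := (lt_max_of_lt_right (sub_pos.2 hx)).ne'
  exact mul_right_cancel₀ h2 h1

/-! ### Measure-theoretic preliminaries -/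

/-- Finiteness on balls gives finiteness on compact sets. -/
lemma measure_inter_compact_lt_top {n : ℕ} {d : ℕ} {U E : Set (Euc n)} (hU : IsOpen U)
    (hfin : ∀ (x : Euc n) (r : ℝ), closedBall x r ⊆ U →
      μH[(d:ℝ)] (E ∩ closedBall x r) < ⊤) {C : Set (Euc n)} (hC : IsCompact C) (hCU : C ⊆ U) :
    μH[(d:ℝ)] (E ∩ C) < ⊤ := by
  have h1 : (μH[(d:ℝ)].restrict E) C < ⊤ := by
    refine hC.measure_lt_top_of_nhdsWithin fun x hx => ?_
    obtain ⟨r, hr, hrU⟩ := nhds_basis_closedBall.mem_iff.1 (hU.mem_nhds (hCU hx))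
    refine ⟨closedBall x r, mem_nhdsWithin_of_mem_nhds (closedBall_mem_nhds x hr), ?_⟩
    rw [Measure.restrict_apply measurableSet_closedBall, inter_comm]
    exact hfin x r hrU
  rwa [Measure.restrict_apply hC.measurableSet, inter_comm] at h1

/-! ### Elementary facts about deformations -/

lemma defW_subset_defWhat {n : ℕ} {U : Set (Euc n)} {φ : ℝ → Euc n → Euc n} {t : ℝ}
    (ht : t ∈ Icc (0:ℝ) 1) : defW U φ t ⊆ defWhat U φ := fun _ hx =>
  mem_biUnion ht (Or.inl hx)

lemma image_defW_subset_defWhat {n : ℕ} {U : Set (Euc n)} {φ : ℝ → Euc n → Euc n} {t : ℝ}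
    (ht : t ∈ Icc (0:ℝ) 1) : φ t '' defW U φ t ⊆ defWhat U φ := fun _ hx =>
  mem_biUnion ht (Or.inr hx)

/-- Any set containing `Ŵ` is stable under the deformation. -/
lemma def_mem_of_mem {n : ℕ} {U V : Set (Euc n)} {φ : ℝ → Euc n → Euc n} {t : ℝ}
    (ht : t ∈ Icc (0:ℝ) 1) (hV : defWhat U φ ⊆ V) {x : Euc n} (hxU : x ∈ U) (hx : x ∈ V) :
    φ t x ∈ V := by
  by_cases hfix : φ t x = x
  · rwa [hfix]
  · exact hV (image_defW_subset_defWhat ht ⟨x, ⟨hxU, hfix⟩, rfl⟩)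

lemma def_eq_of_notMem {n : ℕ} {U V : Set (Euc n)} {φ : ℝ → Euc n → Euc n} {t : ℝ}
    (ht : t ∈ Icc (0:ℝ) 1) (hV : defWhat U φ ⊆ V) {x : Euc n} (hxU : x ∈ U) (hx : x ∉ V) :
    φ t x = x := by
  by_contra hne
  exact hx (hV (defW_subset_defWhat ht ⟨hxU, hne⟩))

/-- Composing a deformation with the pushes `f_{ts}` yields an admissible deformation. -/
lemma push_comp_admissible {n : ℕ} {U : Set (Euc n)} {δ : ℝ}
    {φ : ℝ → Euc n → Euc n} (hφ : IsAdmissibleDef U δ φ) {K : Set (Euc n)} {r : ℝ}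
    (hK : defWhat U φ ⊆ {x | infDist x K < r})
    (hVc : IsCompact (closure {x | infDist x K < r})) (hVU : closure {x | infDist x K < r} ⊆ U)
    (hVδ : diam {x | infDist x K < r} < δ) {v : Euc n} (hv : ‖v‖ = 1) {s : ℝ≥0}
    (hs1 : s < 1) :
    IsAdmissibleDef U δ (fun t x => push K r v (t * s) (φ t x)) := by
  obtain ⟨hmaps, hzero, hcont, ⟨L, hL⟩, -, -, -⟩ := hφ
  have hts : ∀ t ∈ Icc (0:ℝ) 1, 0 ≤ t * s ∧ t * s < 1 := fun t ht => by
    have h1 : (s : ℝ) < 1 := by exact_mod_cast hs1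
    have h2 := s.coe_nonneg
    exact ⟨mul_nonneg ht.1 h2, by nlinarith [ht.1, ht.2]⟩
  have hpush : ∀ t ∈ Icc (0:ℝ) 1, ∀ x, infDist x K < r → infDist (push K r v (t * s) x) K < r :=
    fun t ht x hx => push_infDist_lt hv (hts t ht).1 (hts t ht).2 hx
  have hsub : defWhat U (fun t x => push K r v (t * s) (φ t x)) ⊆ {x | infDist x K < r} := by
    have hW : ∀ t ∈ Icc (0:ℝ) 1, defW U (fun t x => push K r v (t * s) (φ t x)) t ⊆
        {x | infDist x K < r} := by
      rintro t ht x ⟨hxU, hne⟩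
      by_contra hx
      have h1 := def_eq_of_notMem ht hK hxU hx
      exact hne (by simp only [h1]; exact push_eq_self (not_lt.1 hx))
    refine iUnion₂_subset fun t ht => union_subset (hW t ht) ?_
    rintro _ ⟨x, hx, rfl⟩
    exact hpush t ht _ (def_mem_of_mem ht hK hx.1 (hW t ht hx))
  have hcl := closure_mono hsub
  refine ⟨fun t ht x hx => ?_, fun x hx => ?_, ?_, ⟨(1 + s) * L, ?_⟩,
    hVc.of_isClosed_subset isClosed_closure hcl, hcl.trans hVU, ?_⟩
  · by_cases h1 : infDist (φ t x) K < r
    · exact hVU (subset_closure (hpush t ht _ h1))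
    · simp only [push_eq_self (not_lt.1 h1)]
      exact hmaps t ht hx
  · simp [push_zero, hzero x hx]
  · have h1 : ContinuousOn (fun p : ℝ × Euc n => (p.1 * (s : ℝ), φ p.1 p.2))
        (Icc (0:ℝ) 1 ×ˢ U) := by fun_prop
    exact (push_continuous K r v).comp_continuousOn h1
  · simp only [one_mul]
    exact (push_lipschitz K r hv s).comp_lipschitzOnWith hL
  · exact (diam_mono hsub (hVc.isBounded.subset subset_closure)).trans_lt hVδ

/-- If `H^d(E ∩ W₁) ≤ H^d(φ₁(E ∩ W₁)) + c` holds for all admissible `δ`-deformations, then for each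
of them the set `W₁` may be replaced by a suitable neighbourhood `V` of `Ŵ`. -/
lemma measure_le_image_nhd {n d : ℕ} {U E : Set (Euc n)} (hU : IsOpen U)
    (hEU : E ⊆ U) (hEmeas : MeasurableSet E)
    (hfin : ∀ C : Set (Euc n), IsCompact C → C ⊆ U → μH[(d:ℝ)] (E ∩ C) < ⊤)
    {δ : ℝ} {c : ℝ≥0∞}
    (hA : ∀ φ : ℝ → Euc n → Euc n, IsAdmissibleDef U δ φ →
        μH[(d:ℝ)] (E ∩ defW U φ 1) ≤ μH[(d:ℝ)] (φ 1 '' (E ∩ defW U φ 1)) + c)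
    {φ : ℝ → Euc n → Euc n} (hφ : IsAdmissibleDef U δ φ) (hne : (defW U φ 1).Nonempty) :
    ∃ V : Set (Euc n), defWhat U φ ⊆ V ∧ μH[(d:ℝ)] (E ∩ V) < ⊤ ∧
      μH[(d:ℝ)] (E ∩ V) ≤ μH[(d:ℝ)] (φ 1 '' (E ∩ V)) + c := by
  have h01 : (1:ℝ) ∈ Icc (0:ℝ) 1 := by simp
  obtain ⟨x₀, hx₀U, hx₀⟩ := hne
  -- A point that moves provides a direction, so that no case distinction on `n` is needed.
  obtain ⟨v, hv⟩ : ∃ v : Euc n, ‖v‖ = 1 :=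
    ⟨_, norm_smul_inv_norm (𝕜 := ℝ) (sub_ne_zero.2 hx₀)⟩
  have hφ' := hφ
  obtain ⟨hmaps, -, hcont, ⟨L, hL⟩, hKc, hKU, hKδ⟩ := hφ'
  set K := closure (defWhat U φ) with hKdef
  have hKne : K.Nonempty :=
    ⟨x₀, subset_closure (defW_subset_defWhat h01 ⟨hx₀U, hx₀⟩)⟩
  obtain ⟨r₁, hr₁, hr₁U⟩ := hKc.exists_cthickening_subset_open hU hKU
  have hKδ' : diam K < δ := by rwa [hKdef, diam_closure]
  obtain ⟨r, hr, hrr₁, hrδ⟩ : ∃ r > 0, r ≤ r₁ ∧ diam K + 2 * r < δ :=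
    ⟨min r₁ ((δ - diam K) / 4), lt_min hr₁ (by linarith), min_le_left _ _, by
      have := min_le_right r₁ ((δ - diam K) / 4)
      linarith⟩
  have hVeq : {x | infDist x K < r} = thickening r K := by
    ext x
    exact (mem_thickening_iff_infDist_lt hKne).symm
  have hclV : closure {x | infDist x K < r} ⊆ cthickening r K := by
    rw [hVeq]; exact closure_thickening_subset_cthickening r K
  have hcU : cthickening r K ⊆ U := (cthickening_mono hrr₁ K).trans hr₁U
  have hVU := hclV.trans hcU
  have hVc : IsCompact (closure {x | infDist x K < r}) :=
    hKc.cthickening.of_isClosed_subset isClosed_closure hclV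
  have hVδ : diam {x | infDist x K < r} < δ := by
    rw [hVeq]; exact (diam_thickening_le K hr.le).trans_lt hrδ
  have hVo : IsOpen {x | infDist x K < r} := by
    rw [hVeq]; exact isOpen_thickening
  have hKV : defWhat U φ ⊆ {x | infDist x K < r} := by
    rw [hVeq]; exact subset_closure.trans (self_subset_thickening hr K)
  clear_value K
  set V : Set (Euc n) := {x | infDist x K < r} with hVdef
  have hVfin : μH[(d:ℝ)] (E ∩ V) < ⊤ :=
    (measure_mono (inter_subset_inter_right E subset_closure)).trans_lt (hfin _ hVc hVU)
  refine ⟨V, hKV, hVfin, ?_⟩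
  -- The part of `E ∩ V` fixed by the perturbed map, for each parameter.
  let A : ℝ → Set (Euc n) := fun s => {x ∈ E ∩ V | push K r v s (φ 1 x) = x}
  have hAmeas : ∀ s, MeasurableSet (A s) := fun s => by
    have hg : ContinuousOn (fun x => push K r v s (φ 1 x) - x) U := by
      have h1 : ContinuousOn (fun x => (s, φ 1 x)) U := continuousOn_const.prodMk hL.continuousOn
      exact ((push_continuous K r v).comp_continuousOn h1).sub continuousOn_id
    have hopen := hg.isOpen_inter_preimage hU (isOpen_compl_singleton (x := (0 : Euc n)))
    have : A s = (E ∩ V) \ (U ∩ (fun x => push K r v s (φ 1 x) - x) ⁻¹' {0}ᶜ) := by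
      ext x
      simp only [A, mem_ofPred_eq, Set.mem_sdiff, mem_inter_iff, mem_preimage, mem_compl_iff,
        mem_singleton_iff, sub_eq_zero]
      constructor
      · rintro ⟨h1, h2⟩
        exact ⟨h1, fun h3 => h3.2 h2⟩
      · rintro ⟨h1, h2⟩
        exact ⟨h1, by_contra fun h3 => h2 ⟨hEU h1.1, h3⟩⟩
    rw [this]
    exact (hEmeas.inter hVo.measurableSet).diff hopen.measurableSet
  have hAdisj : Pairwise (Function.onFun Disjoint A) := fun s t hst => by
    refine Set.disjoint_left.2 fun x hs ht => hst ?_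
    have h1 : φ 1 x ∈ V := def_mem_of_mem h01 hKV (hEU hs.1.1) hs.1.2
    exact push_param_inj hv h1 (hs.2.trans ht.2.symm)
  have hcount : {s : ℝ | 0 < μH[(d:ℝ)] (A s)}.Countable := by
    refine Measure.countable_meas_pos_of_disjoint_of_meas_iUnion_ne_top _ hAmeas hAdisj ?_
    exact ((measure_mono (iUnion_subset fun s x hx => hx.1)).trans_lt hVfin).ne
  have hkey : ∀ s : ℝ≥0, s < 1 → μH[(d:ℝ)] (A s) = 0 →
      μH[(d:ℝ)] (E ∩ V) ≤ ((1 + s : ℝ≥0) : ℝ≥0∞) ^ d * μH[(d:ℝ)] (φ 1 '' (E ∩ V)) + c := by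
    intro s hs hs0
    have hadm := push_comp_admissible hφ hKV hVc hVU hVδ hv hs
    set ψ : ℝ → Euc n → Euc n := fun t x => push K r v (t * s) (φ t x) with hψ
    have hψ1 : ∀ x, ψ 1 x = push K r v s (φ 1 x) := fun x => by simp [hψ]
    have hsub : E ∩ V ⊆ A s ∪ (E ∩ defW U ψ 1) := fun x hx => by
      by_cases h1 : push K r v s (φ 1 x) = x
      · exact Or.inl ⟨hx, h1⟩
      · exact Or.inr ⟨hx.1, hEU hx.1, by rwa [hψ1]⟩
    have hsub2 : ψ 1 '' (E ∩ defW U ψ 1) ⊆ push K r v s '' (φ 1 '' (E ∩ V)) := by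
      rintro _ ⟨x, ⟨hxE, hxU, hxne⟩, rfl⟩
      refine ⟨φ 1 x, ⟨x, ⟨hxE, ?_⟩, rfl⟩, (hψ1 x).symm⟩
      by_contra hx
      rw [hψ1, def_eq_of_notMem h01 hKV hxU hx] at hxne
      exact hxne (push_eq_self (not_lt.1 hx))
    calc μH[(d:ℝ)] (E ∩ V) ≤ μH[(d:ℝ)] (A s) + μH[(d:ℝ)] (E ∩ defW U ψ 1) :=
          (measure_mono hsub).trans (measure_union_le _ _)
      _ = μH[(d:ℝ)] (E ∩ defW U ψ 1) := by rw [hs0, zero_add]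
      _ ≤ μH[(d:ℝ)] (ψ 1 '' (E ∩ defW U ψ 1)) + c := hA ψ hadm
      _ ≤ μH[(d:ℝ)] (push K r v s '' (φ 1 '' (E ∩ V))) + c := by
          gcongr
      _ ≤ _ := by
          gcongr
          have := (push_lipschitz K r hv s).hausdorffMeasure_image_le (d := d)
            (Nat.cast_nonneg d) (φ 1 '' (E ∩ V))
          rwa [ENNReal.rpow_natCast] at this
  have hlim : Tendsto (fun s : ℝ => ((1 + s.toNNReal : ℝ≥0) : ℝ≥0∞) ^ d *
      μH[(d:ℝ)] (φ 1 '' (E ∩ V)) + c) (𝓝[>] 0) (𝓝 (μH[(d:ℝ)] (φ 1 '' (E ∩ V)) + c)) := by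
    have h1 : Tendsto (fun s : ℝ => ((1 + s.toNNReal : ℝ≥0) : ℝ≥0∞) ^ d) (𝓝[>] 0) (𝓝 1) := by
      have h2 : Continuous (fun s : ℝ => (((1 + s.toNNReal) ^ d : ℝ≥0) : ℝ≥0∞)) :=
        ENNReal.continuous_coe.comp (by fun_prop)
      have h3 := (h2.tendsto 0).mono_left (nhdsWithin_le_nhds (s := Ioi 0))
      simpa using h3
    have h4 := (ENNReal.Tendsto.mul_const (b := μH[(d:ℝ)] (φ 1 '' (E ∩ V))) h1
      (Or.inl one_ne_zero)).add_const c
    simpa using h4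
  refine ge_of_tendsto_of_frequently hlim ?_
  intro hev
  obtain ⟨a, ha, hsub⟩ := mem_nhdsGT_iff_exists_Ioo_subset.1 hev
  have ha' : (0:ℝ) < a := ha
  refine absurd (hcount.mono (s₁ := Ioo 0 (min a 1)) fun s hs => ?_) ?_
  · by_contra hs0
    have hs0' : μH[(d:ℝ)] (A s) = 0 := by simpa using hs0
    have h1 : s.toNNReal < 1 := by
      rw [Real.toNNReal_lt_one]; exact hs.2.trans_le (min_le_right _ _)
    refine hsub ⟨hs.1, hs.2.trans_le (min_le_left _ _)⟩ (hkey s.toNNReal h1 ?_)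
    rwa [Real.coe_toNNReal s hs.1.le]
  · rw [Cardinal.Real.Ioo_countable_iff, not_le]
    exact lt_min ha' one_pos


/-- **Proposition 4.10.** Let `U ⊆ ℝⁿ` be open, `h` a gauge function, and `E` a closed
subset of `U` with locally finite `H^d`-measure. Then `E` is A-almost-minimal of
dimension `d` in `U` with gauge function `h` if and only if it is A'-almost-minimal
with the same gauge function: the competitor inequality
`H^d(E ∩ W₁) ≤ H^d(φ₁(E ∩ W₁)) + h(δ) δ^d` holds for all admissible `δ`-deformations
iff the inequality `H^d(E ∖ φ₁(E)) ≤ H^d(φ₁(E) ∖ E) + h(δ) δ^d` does. -/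
theorem A_iff_A' (n d : ℕ) (U E : Set (Euc n)) (hU : IsOpen U)
    (h : ℝ → ℝ≥0∞) (hgauge : IsGaugeFn h)
    (hEU : E ⊆ U) (hEclosed : closure E ∩ U ⊆ E)
    (hfin : ∀ (x : Euc n) (r : ℝ), closedBall x r ⊆ U →
      μH[(d:ℝ)] (E ∩ closedBall x r) < ⊤) :
    (∀ δ : ℝ, 0 < δ → ∀ φ : ℝ → Euc n → Euc n, IsAdmissibleDef U δ φ →
        μH[(d:ℝ)] (E ∩ defW U φ 1) ≤
          μH[(d:ℝ)] (φ 1 '' (E ∩ defW U φ 1)) + h δ * ENNReal.ofReal (δ ^ d)) ↔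
      (∀ δ : ℝ, 0 < δ → ∀ φ : ℝ → Euc n → Euc n, IsAdmissibleDef U δ φ →
        μH[(d:ℝ)] (E \ φ 1 '' E) ≤
          μH[(d:ℝ)] (φ 1 '' E \ E) + h δ * ENNReal.ofReal (δ ^ d)) := by
  have hE : E = closure E ∩ U := Subset.antisymm (fun x hx => ⟨subset_closure hx, hEU hx⟩) hEclosed
  have hEmeas : MeasurableSet E := by
    rw [hE]; exact isClosed_closure.measurableSet.inter hU.measurableSet
  have h01 : (1:ℝ) ∈ Icc (0:ℝ) 1 := by simp
  have hdiff : ∀ φ : ℝ → Euc n → Euc n, E \ φ 1 '' E ⊆ E ∩ defW U φ 1 := fun φ x hx =>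
    ⟨hx.1, hEU hx.1, fun hfix => hx.2 ⟨x, hx.1, hfix⟩⟩
  constructor
  · intro hA δ hδ φ hφ
    rcases (defW U φ 1).eq_empty_or_nonempty with hW | hW
    · have : E \ φ 1 '' E = ∅ := subset_empty_iff.1 ((hdiff φ).trans (by simp [hW]))
      simp [this]
    obtain ⟨V, hWV, hVfin, hV⟩ := measure_le_image_nhd hU hEU hEmeas
      (fun C hC hCU => measure_inter_compact_lt_top hU hfin hC hCU) (hA δ hδ) hφ hW
    obtain ⟨-, -, -, ⟨L, hL⟩, hKc, hKU, -⟩ := hφ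
    -- `φ₁(E)` is Borel: a compact set together with the part of `E` away from `Ŵ`.
    have himg : MeasurableSet (φ 1 '' E) := by
      set K := closure (defWhat U φ) with hK
      have hEK : IsCompact (E ∩ K) := by
        have : E ∩ K = closure E ∩ K := Subset.antisymm
          (inter_subset_inter_left _ subset_closure) fun x hx => ⟨hEclosed ⟨hx.1, hKU hx.2⟩, hx.2⟩
        rw [this]
        exact hKc.inter_left isClosed_closure
      have h1 : φ 1 '' E = φ 1 '' (E ∩ K) ∪ E \ K := by
        have h2 : φ 1 '' (E \ K) = E \ K := by
          have : EqOn (φ 1) id (E \ K) := fun x hx =>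
            def_eq_of_notMem h01 subset_closure (hEU hx.1) hx.2
          rw [this.image_eq, image_id]
        nth_rw 1 [← inter_union_sdiff E K]
        rw [image_union, h2]
      rw [h1]
      exact (hEK.image_of_continuousOn (hL.continuousOn.mono
        (inter_subset_left.trans hEU))).measurableSet.union (hEmeas.diff hKc.measurableSet)
    have hsub1 : (E \ φ 1 '' E) ⊆ (E ∩ V) \ φ 1 '' E := fun x hx =>
      ⟨⟨hx.1, hWV (defW_subset_defWhat h01 (hdiff φ hx).2)⟩, hx.2⟩
    have hsub2 : φ 1 '' (E ∩ V) ⊆ (φ 1 '' E \ E) ∪ (E ∩ V) ∩ φ 1 '' E := by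
      rintro _ ⟨x, hx, rfl⟩
      have hm : φ 1 x ∈ φ 1 '' E := ⟨x, hx.1, rfl⟩
      by_cases hxE : φ 1 x ∈ E
      · exact Or.inr ⟨⟨hxE, def_mem_of_mem h01 hWV (hEU hx.1) hx.2⟩, hm⟩
      · exact Or.inl ⟨hm, hxE⟩
    have hfin' : μH[(d:ℝ)] ((E ∩ V) ∩ φ 1 '' E) ≠ ⊤ :=
      ((measure_mono inter_subset_left).trans_lt hVfin).ne
    refine (ENNReal.add_le_add_iff_left hfin').1 ?_
    calc μH[(d:ℝ)] ((E ∩ V) ∩ φ 1 '' E) + μH[(d:ℝ)] (E \ φ 1 '' E)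
        ≤ μH[(d:ℝ)] ((E ∩ V) ∩ φ 1 '' E) + μH[(d:ℝ)] ((E ∩ V) \ φ 1 '' E) := by gcongr
      _ = μH[(d:ℝ)] (E ∩ V) := measure_inter_add_sdiff _ himg
      _ ≤ μH[(d:ℝ)] (φ 1 '' (E ∩ V)) + h δ * ENNReal.ofReal (δ ^ d) := hV
      _ ≤ (μH[(d:ℝ)] (φ 1 '' E \ E) + μH[(d:ℝ)] ((E ∩ V) ∩ φ 1 '' E)) +
            h δ * ENNReal.ofReal (δ ^ d) := by
          gcongr
          exact (measure_mono hsub2).trans (measure_union_le _ _)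
      _ = _ := by ring
  · intro hA' δ hδ φ hφ
    set W := defW U φ 1 with hW
    have hsub1 : E ∩ W ⊆ (E \ φ 1 '' E) ∪ φ 1 '' (E ∩ W) ∩ E := by
      intro y hy
      by_cases hyφ : y ∈ φ 1 '' E
      · obtain ⟨x, hx, rfl⟩ := hyφ
        refine Or.inr ⟨⟨x, ⟨hx, hEU hx, fun hfix => ?_⟩, rfl⟩, hy.1⟩
        -- A fixed point `x` would equal `φ₁ x ∈ W`, which is not fixed.
        exact hy.2.2 (by rw [hfix, hfix])
      · exact Or.inl ⟨hy.1, hyφ⟩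
    have hsub2 : φ 1 '' E \ E ⊆ φ 1 '' (E ∩ W) \ E := by
      rintro _ ⟨⟨x, hx, rfl⟩, hxE⟩
      exact ⟨⟨x, ⟨hx, hEU hx, fun hfix => hxE (by rwa [hfix])⟩, rfl⟩, hxE⟩
    calc μH[(d:ℝ)] (E ∩ W)
        ≤ μH[(d:ℝ)] (E \ φ 1 '' E) + μH[(d:ℝ)] (φ 1 '' (E ∩ W) ∩ E) :=
          (measure_mono hsub1).trans (measure_union_le _ _)
      _ ≤ (μH[(d:ℝ)] (φ 1 '' E \ E) + h δ * ENNReal.ofReal (δ ^ d)) +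
            μH[(d:ℝ)] (φ 1 '' (E ∩ W) ∩ E) := by
          gcongr
          exact hA' δ hδ φ hφ
      _ ≤ (μH[(d:ℝ)] (φ 1 '' (E ∩ W) \ E) + h δ * ENNReal.ofReal (δ ^ d)) +
            μH[(d:ℝ)] (φ 1 '' (E ∩ W) ∩ E) := by gcongr
      _ = (μH[(d:ℝ)] (φ 1 '' (E ∩ W) ∩ E) + μH[(d:ℝ)] (φ 1 '' (E ∩ W) \ E)) +
            h δ * ENNReal.ofReal (δ ^ d) := by ring
      _ = _ := by rw [measure_inter_add_sdiff _ hEmeas]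
end
end
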